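/- Consider the very noisy channel family W_ζ(y|x) = Γ(y)(1 + ζλ(x,y)), and assume 𝐂 := max_{P∈P(𝒳)} (1/2) Σ_y Γ(y)·(Σ_x P(x)λ²(x,y) − (Σ_x P(x)λ(x,y))²) > 0 (which ensures C_ζ > 0 for all sufficiently small ζ > 0). Then for every ε ∈ (0, 1/2], limsup_{ζ→0} limsup_{n→∞} (log M*_{fb,ζ}(n, ε) − n·C_ζ)/√(n·V_{min,ζ}) ≤ Φ^{-1}(ε), and for every ε ∈ (1/2, 1), limsup_{ζ→0} limsup_{n→∞} (log M*_{fb,ζ}(n, ε) − n·C_ζ)/√(n·V_{max,ζ}) ≤ Φ^{-1}(ε). -/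

import Mathlib

open MeasureTheory Real Filter Set
open scoped BigOperators ENNReal Classical

noncomputable section

namespace Paper

variable {X Y : Type*} [Fintype X] [Fintype Y]

/-- `P` is a probability mass function on the finite alphabet `X`. -/
def IsDist (P : X → ℝ) : Prop := (∀ x, 0 ≤ P x) ∧ ∑ x, P x = 1

/-- `W` is a discrete memoryless channel (a stochastic matrix). -/
def IsChannel (W : X → Y → ℝ) : Prop := ∀ x, IsDist (W x)

/-- `W` has no all-zero column. -/
def NoZeroColumn (W : X → Y → ℝ) : Prop := ∀ y, ∃ x, 0 < W x y

/-- Output distribution induced by input distribution `P` through `W`. -/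
def outDist (P : X → ℝ) (W : X → Y → ℝ) (y : Y) : ℝ := ∑ x, P x * W x y

/-- Mutual information `I(P; W)` (in nats). -/
def mutInfo (P : X → ℝ) (W : X → Y → ℝ) : ℝ :=
  ∑ x, ∑ y, P x * W x y * Real.log (W x y / outDist P W y)

/-- Shannon capacity `C`. -/
def capacity (W : X → Y → ℝ) : ℝ :=
  sSup {c | ∃ P, IsDist P ∧ mutInfo P W = c}

/-- The set of capacity-achieving input distributions `Π*`. -/
def capacityAchievers (W : X → Y → ℝ) : Set (X → ℝ) :=
  {P | IsDist P ∧ mutInfo P W = capacity W}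

/-- The (unique) capacity-achieving output distribution `q*`. -/
def qStar (W : X → Y → ℝ) : Y → ℝ :=
  if h : (capacityAchievers W).Nonempty then outDist h.choose W else fun _ => 0

/-- The information density `i*(x,y) = log (W(y|x)/q*(y))`. -/
def iStar (W : X → Y → ℝ) (x : X) (y : Y) : ℝ := Real.log (W x y / qStar W y)

/-- `ν_x = Var[i*(x,Y)]`, `Y ~ W(·|x)`. -/
def nu (W : X → Y → ℝ) (x : X) : ℝ :=
  ∑ y, W x y * (iStar W x y) ^ 2 - (∑ y, W x y * iStar W x y) ^ 2

/-- `V_min`. -/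
def Vmin (W : X → Y → ℝ) : ℝ :=
  sInf {v | ∃ P ∈ capacityAchievers W, v = ∑ x, P x * nu W x}

/-- `V_max`. -/
def Vmax (W : X → Y → ℝ) : ℝ :=
  sSup {v | ∃ P ∈ capacityAchievers W, v = ∑ x, P x * nu W x}

/-- `V_ε`. -/
def Veps (W : X → Y → ℝ) (ε : ℝ) : ℝ := if ε < 1/2 then Vmin W else Vmax W

/-- `ν_min = min_x ν_x`. -/
def numin (W : X → Y → ℝ) [Nonempty X] : ℝ := ⨅ x, nu W x

/-- `ν_max = max_x ν_x`. -/
def numax (W : X → Y → ℝ) [Nonempty X] : ℝ := ⨆ x, nu W x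

/-- Average error probability of the feedback code `(enc, dec)` with `M` messages
and blocklength `n`. -/
def errProb (W : X → Y → ℝ) (n M : ℕ) (enc : Fin M → List Y → X)
    (dec : (Fin n → Y) → Fin M) : ℝ :=
  (M : ℝ)⁻¹ * ∑ m : Fin M, ∑ y : Fin n → Y,
    (∏ k : Fin n, W (enc m ((List.ofFn y).take (k : ℕ))) (y k)) *
      (if dec y = m then 0 else 1)

/-- Minimum average error probability of `(n,R)` feedback codes. -/
def minErr (W : X → Y → ℝ) (n : ℕ) (R : ℝ) : ℝ :=
  sInf {e | ∃ enc dec, e = errProb W n ⌈Real.exp (n * R)⌉₊ enc dec}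

/-- `M*_fb(n, ε)`. -/
def Mfb (W : X → Y → ℝ) (n : ℕ) (ε : ℝ) : ℝ :=
  sSup {m | ∃ R : ℝ, m = (⌈Real.exp (n * R)⌉₊ : ℝ) ∧ minErr W n R ≤ ε}

/-- Standard Gaussian density `φ`. -/
def gpdf (u : ℝ) : ℝ := (Real.sqrt (2 * Real.pi))⁻¹ * Real.exp (-u ^ 2 / 2)

/-- Standard Gaussian CDF `Φ`. -/
def gcdf (t : ℝ) : ℝ := ∫ u in Set.Iic t, gpdf u

/-- Inverse Gaussian CDF `Φ⁻¹`. -/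
def gcdfInv : ℝ → ℝ := Function.invFun gcdf

/-- The sequence `(log M*_fb(n,ε) - nC)/√n` whose liminf/limsup is the
second-order coding rate with feedback. -/
def SOfb (W : X → Y → ℝ) (ε : ℝ) (n : ℕ) : ℝ :=
  (Real.log (Mfb W n ε) - n * capacity W) / Real.sqrt n

/-- The very noisy channel `W_ζ(y|x) = Γ(y)(1 + ζ λ(x,y))`. -/
def VNC (Γ : Y → ℝ) (lam : X → Y → ℝ) (ζ : ℝ) : X → Y → ℝ :=
  fun x y => Γ y * (1 + ζ * lam x y)

/-- The constant `𝐂` governing the very noisy capacity. -/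
def bigC (Γ : Y → ℝ) (lam : X → Y → ℝ) : ℝ :=
  sSup {c | ∃ P : X → ℝ, IsDist P ∧ c = 1 / 2 * ∑ y, Γ y *
    ((∑ x, P x * lam x y ^ 2) - (∑ x, P x * lam x y) ^ 2)}

/-!
Under a feedback strategy the normalised information sum
`s = ∑ (i*(xₖ, yₖ) - C) / √(n V)` moves by steps whose mean is nonpositive: every input letter has
mean information density at most `C`. A letter with mean exactly `C` has variance close to `V`,
because on a channel with small information densities all the dispersions are close to `2 C`: the
variance of `log (w / q)` is nearly twice its mean under `w`, both being governed by the `χ²`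
divergence. A letter with mean below `C` has a drift of order `1 / √n`, which beats any second
order effect of its variance. Hence the backward heat function `(v, s) ↦ Φ (s / √v)`, with `v` the
remaining time, is almost a supermartingale along every strategy, so that feedback cannot make the
upper tail of the information sum heavier than the Gaussian one. The one-shot converse of
Verdú and Han turns this into the bound on the code size.

Feinstein's lemma with Chebyshev's inequality gives a lower bound of the same order. It is only
needed because the `limsup` of a real sequence that tends to `-∞` is not meaningful.
-/

open ProbabilityTheory InformationTheory
open scoped Topology

/-! ### The standard Gaussian distribution -/

lemma gpdf_eq_gaussianPDFReal : gpdf = gaussianPDFReal 0 1 := by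
  funext u
  simp [gpdf, gaussianPDFReal]

lemma gcdf_eq_cdf : gcdf = cdf (gaussianReal 0 1) := by
  funext t
  rw [cdf_eq_real, measureReal_def, gaussianReal_apply_eq_integral 0 one_ne_zero,
    ENNReal.toReal_ofReal (integral_nonneg fun _ => gaussianPDFReal_nonneg 0 1 _), gcdf,
    gpdf_eq_gaussianPDFReal]

lemma gpdf_pos (u : ℝ) : 0 < gpdf u := by
  unfold gpdf
  positivity

lemma continuous_gpdf : Continuous gpdf := by
  unfold gpdf
  fun_prop

lemma integrable_gpdf : Integrable gpdf := by
  rw [gpdf_eq_gaussianPDFReal]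
  exact integrable_gaussianPDFReal 0 1

lemma hasDerivAt_gpdf (z : ℝ) : HasDerivAt gpdf (-z * gpdf z) z := by
  have h : HasDerivAt (fun u : ℝ => -u ^ 2 / 2) (-z) z :=
    (((hasDerivAt_pow 2 z).neg).div_const 2).congr_deriv (by norm_num; ring)
  exact (h.exp.const_mul _).congr_deriv (by rw [gpdf]; ring)

lemma hasDerivAt_gcdf (t : ℝ) : HasDerivAt gcdf (gpdf t) t := by
  have h : gcdf = fun t => gcdf 0 + ∫ u in (0 : ℝ)..t, gpdf u := by
    funext t
    rw [← intervalIntegral.integral_Iic_sub_Iic integrable_gpdf.integrableOn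
      integrable_gpdf.integrableOn, gcdf, gcdf, add_sub_cancel]
  rw [h]
  exact (intervalIntegral.integral_hasDerivAt_right integrable_gpdf.intervalIntegrable
    (continuous_gpdf.stronglyMeasurableAtFilter _ _) continuous_gpdf.continuousAt).const_add _

lemma continuous_gcdf : Continuous gcdf :=
  continuous_iff_continuousAt.2 fun t => (hasDerivAt_gcdf t).continuousAt

lemma strictMono_gcdf : StrictMono gcdf :=
  strictMono_of_hasDerivAt_pos hasDerivAt_gcdf gpdf_pos

lemma gcdf_nonneg (t : ℝ) : 0 ≤ gcdf t := by
  rw [gcdf_eq_cdf]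
  exact cdf_nonneg _ t

lemma tendsto_gcdf_atTop : Tendsto gcdf atTop (𝓝 1) := by
  rw [gcdf_eq_cdf]
  exact tendsto_cdf_atTop _

lemma tendsto_gcdf_atBot : Tendsto gcdf atBot (𝓝 0) := by
  rw [gcdf_eq_cdf]
  exact tendsto_cdf_atBot _

lemma gcdf_neg (t : ℝ) : gcdf (-t) = 1 - gcdf t := by
  have htail : gcdf (-t) = ∫ u in Ioi t, gpdf u := by
    simpa [gcdf, gpdf] using integral_comp_neg_Iic (-t) gpdf
  have htotal : gcdf t + ∫ u in Ioi t, gpdf u = ∫ u, gpdf u :=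
    intervalIntegral.integral_Iic_add_Ioi integrable_gpdf.integrableOn integrable_gpdf.integrableOn
  rw [gpdf_eq_gaussianPDFReal, integral_gaussianPDFReal_eq_one 0 one_ne_zero,
    ← gpdf_eq_gaussianPDFReal] at htotal
  linarith

lemma gcdf_gcdfInv {ε : ℝ} (h0 : 0 < ε) (h1 : ε < 1) : gcdf (gcdfInv ε) = ε := by
  obtain ⟨a, ha⟩ := (tendsto_gcdf_atBot.eventually_lt_const h0).exists
  obtain ⟨b, hb⟩ := (tendsto_gcdf_atTop.eventually_const_lt h1).exists
  exact Function.invFun_eq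
    (mem_range_of_exists_le_of_exists_ge continuous_gcdf ⟨a, ha.le⟩ ⟨b, hb.le⟩)

lemma gpdf_le_exp_div_two (z : ℝ) : gpdf z ≤ exp (-z ^ 2 / 2) / 2 := by
  have hsqrt : 2 ≤ √(2 * π) := (Real.le_sqrt' two_pos).2 (by linarith [pi_gt_three])
  rw [gpdf, div_eq_inv_mul (exp _)]
  exact mul_le_mul_of_nonneg_right (inv_anti₀ two_pos hsqrt) (exp_pos _).le

lemma abs_pow_mul_gpdf_le (z : ℝ) {k : ℕ} (hk : k ≤ 3) : |z| ^ k * gpdf z ≤ 1 := by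
  have hexp : 1 + z ^ 2 / 2 + (z ^ 2 / 2) ^ 2 / 2 ≤ exp (z ^ 2 / 2) :=
    quadratic_le_exp_of_nonneg (by positivity)
  have hpow : |z| ^ k ≤ 2 * exp (z ^ 2 / 2) := by
    rw [← sq_abs z] at hexp ⊢
    interval_cases k <;> nlinarith [abs_nonneg z, sq_nonneg (|z| - 1), sq_nonneg (|z| * (|z| - 2))]
  calc |z| ^ k * gpdf z ≤ 2 * exp (z ^ 2 / 2) * (exp (-z ^ 2 / 2) / 2) :=
        mul_le_mul hpow (gpdf_le_exp_div_two z) (gpdf_pos z).le (by positivity)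
    _ = 1 := by
        rw [neg_div, exp_neg]
        field_simp

/-! ### The heat flow of a step function -/

section Taylor

variable {f f' f'' f''' : ℝ → ℝ} {a b B : ℝ}

lemma abs_sub_le_mul_abs_sub_pow {k : ℕ} (hB : 0 ≤ B)
    (hf : ∀ u ∈ uIcc a b, HasDerivAt f (f' u) u)
    (hf' : ∀ u ∈ uIcc a b, |f' u| ≤ B * |u - a| ^ k) : |f b - f a| ≤ B * |b - a| ^ (k + 1) := by
  have hbound : ∀ u ∈ uIcc a b, ‖f' u‖ ≤ B * |b - a| ^ k := fun u hu =>
    (hf' u hu).trans (by gcongr B * ?_ ^ k; exact abs_sub_left_of_mem_uIcc hu)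
  calc |f b - f a| ≤ B * |b - a| ^ k * |b - a| :=
        (convex_uIcc a b).norm_image_sub_le_of_norm_hasDerivWithin_le
          (fun u hu => (hf u hu).hasDerivWithinAt) hbound left_mem_uIcc right_mem_uIcc
    _ = B * |b - a| ^ (k + 1) := by ring

lemma abs_sub_sub_mul_le (hf : ∀ u ∈ uIcc a b, HasDerivAt f (f' u) u)
    (hf' : ∀ u ∈ uIcc a b, HasDerivAt f' (f'' u) u) (hB : ∀ u ∈ uIcc a b, |f'' u| ≤ B) :
    |f b - f a - f' a * (b - a)| ≤ B * |b - a| ^ 2 := by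
  have hB0 : 0 ≤ B := (abs_nonneg _).trans (hB a left_mem_uIcc)
  have hf'_sub : ∀ u ∈ uIcc a b, |f' u - f' a| ≤ B * |u - a| ^ 1 := fun u hu => by
    have hsub : uIcc a u ⊆ uIcc a b := uIcc_subset_uIcc_left hu
    exact abs_sub_le_mul_abs_sub_pow (k := 0) hB0 (fun w hw => hf' w (hsub hw))
      fun w hw => by simpa using hB w (hsub hw)
  convert abs_sub_le_mul_abs_sub_pow hB0 (f := fun u => f u - f' a * (u - a))
    (fun u hu => ((hf u hu).sub (((hasDerivAt_id u).sub_const a).const_mul (f' a))).congr_deriv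
      (by ring)) hf'_sub using 2
  ring

lemma abs_sub_sub_mul_sub_mul_sq_le (hf : ∀ u ∈ uIcc a b, HasDerivAt f (f' u) u)
    (hf' : ∀ u ∈ uIcc a b, HasDerivAt f' (f'' u) u)
    (hf'' : ∀ u ∈ uIcc a b, HasDerivAt f'' (f''' u) u) (hB : ∀ u ∈ uIcc a b, |f''' u| ≤ B) :
    |f b - f a - f' a * (b - a) - f'' a / 2 * (b - a) ^ 2| ≤ B * |b - a| ^ 3 := by
  have hB0 : 0 ≤ B := (abs_nonneg _).trans (hB a left_mem_uIcc)
  have hf'_sub : ∀ u ∈ uIcc a b, |f' u - f' a - f'' a * (u - a)| ≤ B * |u - a| ^ 2 := fun u hu => by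
    have hsub : uIcc a u ⊆ uIcc a b := uIcc_subset_uIcc_left hu
    exact abs_sub_sub_mul_le (fun w hw => hf' w (hsub hw)) (fun w hw => hf'' w (hsub hw))
      fun w hw => hB w (hsub hw)
  convert abs_sub_le_mul_abs_sub_pow hB0
    (f := fun u => f u - f' a * (u - a) - f'' a / 2 * (u - a) ^ 2)
    (fun u hu => (((hf u hu).sub (((hasDerivAt_id u).sub_const a).const_mul (f' a))).sub
      ((((hasDerivAt_id u).sub_const a).pow 2).const_mul (f'' a / 2))).congr_deriv
        (by simp; ring)) hf'_sub using 2
  ring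

end Taylor

/-- The solution at time `v` and position `s` of the heat equation `∂ᵥ = ∂ₛₛ / 2` started from the
indicator of the half-line `(0, ∞)`. -/
def heat (v s : ℝ) : ℝ := gcdf (s / √v)

/-- The first space derivative of `heat`. -/
def heatS (v s : ℝ) : ℝ := gpdf (s / √v) / √v

/-- The second space derivative of `heat`, which is twice its time derivative. -/
def heatSS (v s : ℝ) : ℝ := -(s / √v) * gpdf (s / √v) / v

/-- The third space derivative of `heat`. -/
def heatSSS (v s : ℝ) : ℝ := ((s / √v) ^ 2 - 1) * gpdf (s / √v) / √v ^ 3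

/-- The time derivative of `heatSS`. -/
def heatSSV (v s : ℝ) : ℝ := (3 * (s / √v) - (s / √v) ^ 3) / 2 * gpdf (s / √v) / v ^ 2

lemma heat_nonneg (v s : ℝ) : 0 ≤ heat v s := gcdf_nonneg _

lemma monotone_heat (v : ℝ) : Monotone (heat v) := fun _ _ h =>
  strictMono_gcdf.monotone (by gcongr)

lemma heatS_nonneg (v s : ℝ) : 0 ≤ heatS v s := div_nonneg (gpdf_pos _).le (sqrt_nonneg v)

lemma hasDerivAt_heat (v s : ℝ) : HasDerivAt (heat v) (heatS v s) s :=
  ((hasDerivAt_gcdf _).comp s ((hasDerivAt_id s).div_const √v)).congr_deriv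
    (by rw [heatS, id]; ring)

section PosTime

variable {v : ℝ} (hv : 0 < v) (s : ℝ)

include hv

lemma hasDerivAt_heatS : HasDerivAt (heatS v) (heatSS v s) s := by
  refine (((hasDerivAt_gpdf _).comp s ((hasDerivAt_id s).div_const √v)).div_const √v).congr_deriv ?_
  have hsq : √v * √v = v := mul_self_sqrt hv.le
  rw [heatSS, id, mul_one_div, div_div, hsq]

lemma hasDerivAt_heatSS : HasDerivAt (heatSS v) (heatSSS v s) s := by
  have hz := (hasDerivAt_id s).div_const √v
  refine ((hz.neg.mul ((hasDerivAt_gpdf _).comp s hz)).div_const v).congr_deriv ?_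
  have : 0 < √v := sqrt_pos.2 hv
  simp only [heatSSS, id, Pi.neg_apply, Function.comp]
  nth_rw 7 [← sq_sqrt hv.le]
  field_simp
  ring

lemma hasDerivAt_div_sqrt : HasDerivAt (fun v => s / √v) (-(s / √v) / (2 * v)) v := by
  have hr := sqrt_pos.2 hv
  refine ((hasDerivAt_const v s).div (hasDerivAt_sqrt hv.ne') hr.ne').congr_deriv ?_
  rw [sq_sqrt hv.le]
  field_simp
  ring

lemma hasDerivAt_heat_time : HasDerivAt (fun v => heat v s) (heatSS v s / 2) v :=
  ((hasDerivAt_gcdf _).comp v (hasDerivAt_div_sqrt hv s)).congr_deriv (by rw [heatSS]; field_simp)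

lemma hasDerivAt_heatSS_time : HasDerivAt (fun v => heatSS v s) (heatSSV v s) v := by
  have hz := hasDerivAt_div_sqrt hv s
  refine ((hz.neg.mul ((hasDerivAt_gpdf _).comp v hz)).div (hasDerivAt_id v) hv.ne').congr_deriv ?_
  simp only [heatSSV, Pi.neg_apply, Pi.mul_apply, Function.comp, id]
  field_simp
  ring

lemma abs_heatSS_le : |heatSS v s| ≤ 1 / v := by
  rw [heatSS, abs_div, abs_of_pos hv, abs_mul, abs_neg, abs_of_pos (gpdf_pos _)]
  gcongr
  simpa using abs_pow_mul_gpdf_le (s / √v) (k := 1) (by norm_num)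

lemma abs_heatSSS_le : |heatSSS v s| ≤ 2 / √v ^ 3 := by
  have hr := sqrt_pos.2 hv
  rw [heatSSS, abs_div, abs_of_pos (pow_pos hr 3)]
  gcongr
  set z := s / √v
  calc |(z ^ 2 - 1) * gpdf z| ≤ |z| ^ 2 * gpdf z + |z| ^ 0 * gpdf z := by
        rw [abs_mul, abs_of_pos (gpdf_pos z), ← add_mul, sq_abs, pow_zero]
        gcongr
        · exact (gpdf_pos z).le
        · exact abs_le.2 ⟨by linarith [sq_nonneg z], by linarith⟩
    _ ≤ 2 := by
        linarith [abs_pow_mul_gpdf_le z (k := 2) (by norm_num),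
          abs_pow_mul_gpdf_le z (k := 0) (by norm_num)]

lemma abs_heatSSV_le : |heatSSV v s| ≤ 2 / v ^ 2 := by
  rw [heatSSV, abs_div, abs_of_pos (pow_pos hv 2)]
  gcongr
  set z := s / √v
  calc |(3 * z - z ^ 3) / 2 * gpdf z| ≤ (3 * (|z| ^ 1 * gpdf z) + |z| ^ 3 * gpdf z) / 2 := by
        rw [abs_mul, abs_of_pos (gpdf_pos z), abs_div, abs_two]
        have : |3 * z - z ^ 3| ≤ 3 * |z| + |z| ^ 3 :=
          (abs_sub _ _).trans_eq (by rw [abs_mul, abs_pow, abs_of_pos three_pos])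
        nlinarith [gpdf_pos z]
    _ ≤ 2 := by
        linarith [abs_pow_mul_gpdf_le z (k := 1) (by norm_num), abs_pow_mul_gpdf_le z le_rfl]

lemma heat_add_le (ξ : ℝ) :
    heat v (s + ξ) ≤ heat v s + heatS v s * ξ + heatSS v s / 2 * ξ ^ 2 + 2 / √v ^ 3 * |ξ| ^ 3 := by
  have := abs_sub_sub_mul_sub_mul_sq_le (a := s) (b := s + ξ)
    (fun u _ => hasDerivAt_heat v u) (fun u _ => hasDerivAt_heatS hv u)
    (fun u _ => hasDerivAt_heatSS hv u) (fun u _ => abs_heatSSS_le hv u)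
  rw [add_sub_cancel_left] at this
  linarith [(abs_le.1 this).2]

lemma le_heat_add_time {h : ℝ} (hh : 0 ≤ h) :
    heat v s + heatSS v s / 2 * h - 1 / v ^ 2 * h ^ 2 ≤ heat (v + h) s := by
  have hle : ∀ u ∈ uIcc v (v + h), v ≤ u := fun u hu => by
    rw [uIcc_of_le (by linarith)] at hu
    exact hu.1
  have hbound : ∀ u ∈ uIcc v (v + h), |heatSSV u s / 2| ≤ 1 / v ^ 2 := fun u hu => by
    rw [abs_div, abs_two, div_le_iff₀ two_pos, one_div_mul_eq_div]
    exact (abs_heatSSV_le (hv.trans_le (hle u hu)) s).trans (by gcongr; exact hle u hu)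
  have := abs_sub_sub_mul_le (a := v) (b := v + h)
    (fun u hu => hasDerivAt_heat_time (hv.trans_le (hle u hu)) s)
    (fun u hu => (hasDerivAt_heatSS_time (hv.trans_le (hle u hu)) s).div_const 2) hbound
  rw [add_sub_cancel_left, sq_abs] at this
  linarith [(abs_le.1 this).1]

lemma abs_heatSS_le_mul_heatS_add {L : ℝ} (hL : 0 < L) :
    |heatSS v s| ≤ L * heatS v s + 1 / (√v ^ 3 * L) := by
  have : 0 < √v := sqrt_pos.2 hv
  set q := |s / √v| / √v with hq
  have hSS : |heatSS v s| = q * heatS v s := by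
    rw [heatSS, abs_div, abs_of_pos hv, abs_mul, abs_neg, abs_of_pos (gpdf_pos _), hq, heatS]
    nth_rw 3 [← sq_sqrt hv.le]
    ring
  have hqL : q ≤ L + q ^ 2 / L := by
    rw [← sub_nonneg, show L + q ^ 2 / L - q = ((L - q / 2) ^ 2 + 3 / 4 * q ^ 2) / L by
      field_simp; ring]
    positivity
  have hq2 : q ^ 2 * heatS v s ≤ 1 / √v ^ 3 := by
    rw [hq, heatS, div_pow, div_mul_div_comm, ← pow_succ]
    gcongr
    exact abs_pow_mul_gpdf_le _ (by norm_num)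
  calc |heatSS v s| ≤ (L + q ^ 2 / L) * heatS v s := by
        rw [hSS]
        exact mul_le_mul_of_nonneg_right hqL (heatS_nonneg v s)
    _ = L * heatS v s + q ^ 2 * heatS v s / L := by ring
    _ ≤ L * heatS v s + 1 / √v ^ 3 / L := by gcongr
    _ = L * heatS v s + 1 / (√v ^ 3 * L) := by rw [div_div]

end PosTime

/-! ### Feedback strategies -/

section Feedback

omit [Fintype X]

/-- Expectation of `g (Y₁, …, Yₙ)` when the inputs of the channel `W` are chosen from the past
outputs by the feedback strategy `f`. -/
def feedbackExp (W : X → Y → ℝ) (f : List Y → X) (n : ℕ) (g : (Fin n → Y) → ℝ) : ℝ :=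
  ∑ y : Fin n → Y, (∏ k : Fin n, W (f ((List.ofFn y).take (k : ℕ))) (y k)) * g y

omit [Fintype Y] in
/-- The sum of `ξ` over the input-output pairs that the feedback strategy `f` produces along the
outputs `y`. -/
def pathSum (ξ : X → Y → ℝ) (f : List Y → X) {n : ℕ} (y : Fin n → Y) : ℝ :=
  ∑ k : Fin n, ξ (f ((List.ofFn y).take (k : ℕ))) (y k)

variable {W : X → Y → ℝ} {n : ℕ}

lemma errProb_eq_sum_feedbackExp (W : X → Y → ℝ) {M : ℕ} (enc : Fin M → List Y → X)
    (dec : (Fin n → Y) → Fin M) :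
    errProb W n M enc dec =
      (M : ℝ)⁻¹ * ∑ m, feedbackExp W (enc m) n fun y => if dec y = m then 0 else 1 := rfl

omit [Fintype Y] in
lemma take_ofFn_snoc (y : Fin n → Y) (a : Y) {k : ℕ} (hk : k ≤ n) :
    (List.ofFn (Fin.snoc y a : Fin (n + 1) → Y)).take k = (List.ofFn y).take k := by
  rw [List.ofFn_succ', List.concat_eq_append]
  simp only [Fin.snoc_castSucc]
  rw [List.take_append_of_le_length (by simpa using hk)]

omit [Fintype Y] in
lemma take_ofFn_self (y : Fin n → Y) : (List.ofFn y).take n = List.ofFn y :=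
  List.take_of_length_le (by simp)

lemma feedbackExp_succ (W : X → Y → ℝ) (f : List Y → X) (g : (Fin (n + 1) → Y) → ℝ) :
    feedbackExp W f (n + 1) g =
      feedbackExp W f n fun y => ∑ a, W (f (List.ofFn y)) a * g (Fin.snoc y a) := by
  rw [feedbackExp, ← (Fin.snocEquiv fun _ : Fin (n + 1) => Y).sum_comp, Fintype.sum_prod_type,
    Finset.sum_comm]
  refine Finset.sum_congr rfl fun y _ => ?_
  rw [Finset.mul_sum]
  refine Finset.sum_congr rfl fun a _ => ?_
  simp only [Fin.snocEquiv, Equiv.coe_fn_mk, Fin.prod_univ_castSucc, Fin.snoc_castSucc,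
    Fin.snoc_last, Fin.val_castSucc, Fin.val_last, take_ofFn_snoc y a le_rfl, take_ofFn_self,
    take_ofFn_snoc y a (Fin.is_lt _).le]
  ring

omit [Fintype Y] in
lemma pathSum_snoc (ξ : X → Y → ℝ) (f : List Y → X) (y : Fin n → Y) (a : Y) :
    pathSum ξ f (Fin.snoc y a : Fin (n + 1) → Y) = pathSum ξ f y + ξ (f (List.ofFn y)) a := by
  simp only [pathSum, Fin.sum_univ_castSucc, Fin.snoc_castSucc, Fin.snoc_last, Fin.val_castSucc,
    Fin.val_last, take_ofFn_snoc y a le_rfl, take_ofFn_self, take_ofFn_snoc y a (Fin.is_lt _).le]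

omit [Fintype Y] in
lemma pathSum_const_mul (c : ℝ) (ξ : X → Y → ℝ) (f : List Y → X) (y : Fin n → Y) :
    pathSum (fun x y => c * ξ x y) f y = c * pathSum ξ f y :=
  (Finset.mul_sum ..).symm

omit [Fintype Y] in
lemma pathSum_sub_div (ξ : X → Y → ℝ) (c r : ℝ) (f : List Y → X) (y : Fin n → Y) :
    pathSum (fun x y => (ξ x y - c) / r) f y = (pathSum ξ f y - n * c) / r := by
  simp [pathSum, ← Finset.sum_div, Finset.sum_sub_distrib]

lemma feedbackExp_mono (hW : IsChannel W) (f : List Y → X) {g h : (Fin n → Y) → ℝ}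
    (hgh : ∀ y, g y ≤ h y) : feedbackExp W f n g ≤ feedbackExp W f n h :=
  Finset.sum_le_sum fun y _ =>
    mul_le_mul_of_nonneg_left (hgh y) (Finset.prod_nonneg fun _ _ => (hW _).1 _)

lemma feedbackExp_add (W : X → Y → ℝ) (f : List Y → X) (g h : (Fin n → Y) → ℝ) :
    feedbackExp W f n (fun y => g y + h y) = feedbackExp W f n g + feedbackExp W f n h := by
  simp only [feedbackExp, mul_add, Finset.sum_add_distrib]

lemma feedbackExp_const (hW : IsChannel W) (f : List Y → X) (n : ℕ) (c : ℝ) :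
    feedbackExp W f n (fun _ => c) = c := by
  induction n with
  | zero => simp [feedbackExp]
  | succ n ih =>
    rw [feedbackExp_succ]
    simpa only [← Finset.sum_mul, (hW _).2, one_mul] using ih

/-- Dynamic programming: a value function that loses at most `e` per step whatever the input
bounds the expected payoff of every strategy. -/
lemma feedbackExp_pathSum_le (hW : IsChannel W) (ξ : X → Y → ℝ) (f : List Y → X)
    (F : ℕ → ℝ → ℝ) (e : ℝ) (n : ℕ)
    (hF : ∀ k < n, ∀ x s, ∑ y, W x y * F (k + 1) (s + ξ x y) ≤ F k s + e) :
    feedbackExp W f n (fun y => F n (pathSum ξ f y)) ≤ F 0 0 + n * e := by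
  induction n with
  | zero => simp [feedbackExp, pathSum]
  | succ n ih =>
    calc feedbackExp W f (n + 1) (fun y => F (n + 1) (pathSum ξ f y))
        ≤ feedbackExp W f n (fun y => F n (pathSum ξ f y) + e) := by
          rw [feedbackExp_succ]
          simp only [pathSum_snoc]
          exact feedbackExp_mono hW f fun y => hF n n.lt_succ_self _ _
      _ ≤ F 0 0 + n * e + e := by
          rw [feedbackExp_add, feedbackExp_const hW]
          linarith [ih fun k hk => hF k (hk.trans n.lt_succ_self)]
      _ = F 0 0 + (n + 1 : ℕ) * e := by
          push_cast
          ring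

end Feedback

/-! ### A Gaussian tail bound for controlled sums -/

section ControlledSum

/-- Under the distribution `w`, the step `u` has nonpositive mean, and variance within `δ` of `1`
when its mean vanishes. -/
structure IsNearDiffusive (w u : Y → ℝ) (δ : ℝ) : Prop where
  sum_mul_nonpos : ∑ y, w y * u y ≤ 0
  abs_sum_sq_sub_one_le : ∑ y, w y * u y = 0 → |∑ y, w y * u y ^ 2 - 1| ≤ δ

variable {w u : Y → ℝ}

lemma IsNearDiffusive.mono {δ δ' : ℝ} (h : IsNearDiffusive w u δ) (hδ : δ ≤ δ') :
    IsNearDiffusive w u δ' :=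
  ⟨h.sum_mul_nonpos, fun h0 => (h.abs_sum_sq_sub_one_le h0).trans hδ⟩

lemma sum_mul_heat_add_mul_le (hw : IsDist w) (u : Y → ℝ) {v θ : ℝ} (hv : 0 < v) (hθ : 0 ≤ θ)
    (s : ℝ) : ∑ y, w y * heat v (s + θ * u y) ≤ heat v s + θ * (∑ y, w y * u y) * heatS v s
      + θ ^ 2 * (∑ y, w y * u y ^ 2) / 2 * heatSS v s
      + 2 / √v ^ 3 * θ ^ 3 * ∑ y, w y * |u y| ^ 3 := by
  calc ∑ y, w y * heat v (s + θ * u y)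
      ≤ ∑ y, w y * (heat v s + heatS v s * (θ * u y) + heatSS v s / 2 * (θ * u y) ^ 2
          + 2 / √v ^ 3 * |θ * u y| ^ 3) :=
        Finset.sum_le_sum fun y _ => mul_le_mul_of_nonneg_left (heat_add_le hv s _) (hw.1 y)
    _ = ∑ y, (w y * heat v s + w y * u y * (θ * heatS v s)
          + w y * u y ^ 2 * (θ ^ 2 / 2 * heatSS v s)
          + w y * |u y| ^ 3 * (2 / √v ^ 3 * θ ^ 3)) :=
        Finset.sum_congr rfl fun y _ => by
          rw [abs_mul, abs_of_nonneg hθ]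
          ring
    _ = _ := by
        simp only [Finset.sum_add_distrib, ← Finset.sum_mul, hw.2]
        ring

/-- The gain from a variance `m₂ ≠ 1` is at most `|m₂ - 1| |heatSS| / 2` per unit of time. A small
loss `θ m₁` of drift outweighs it except where `heatS` is tiny, and there `heatSS` is tiny too. -/
lemma eventually_drift_add_diffusion_le {τ e m₁ m₂ : ℝ} (hτ : 0 < τ) (he : 0 < e) (hm₁ : m₁ ≤ 0)
    (hm₂ : m₁ = 0 → |m₂ - 1| ≤ τ * e) : ∀ᶠ θ in 𝓝[>] 0, ∀ v, τ ≤ v → ∀ s,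
      θ * m₁ * heatS v s + θ ^ 2 * (m₂ - 1) / 2 * heatSS v s ≤ e / 2 * θ ^ 2 := by
  have : 0 < √τ := sqrt_pos.2 hτ
  rcases hm₁.eq_or_lt with rfl | hm₁
  · refine Eventually.of_forall fun θ v hv s => ?_
    have hdiff : (m₂ - 1) * heatSS v s ≤ e := by
      calc (m₂ - 1) * heatSS v s ≤ |m₂ - 1| * |heatSS v s| := by
            rw [← abs_mul]
            exact le_abs_self _
        _ ≤ τ * e * (1 / v) := by
            gcongr
            · exact hm₂ rfl
            · exact abs_heatSS_le (hτ.trans_le hv) s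
        _ ≤ τ * e * (1 / τ) := by gcongr
        _ = e := by field_simp
    nlinarith [sq_nonneg θ]
  · set c := |m₂ - 1| + 1
    have hc0 : 0 < c := by positivity
    set L := c / (√τ ^ 3 * e) with hL
    have hL0 : 0 < L := by positivity
    have hsmall : ∀ᶠ θ in 𝓝[>] (0 : ℝ), θ < -m₁ / (c * L / 2) :=
      (tendsto_nhdsWithin_of_tendsto_nhds tendsto_id).eventually_lt_const
        (div_pos (neg_pos.2 hm₁) (by positivity))
    filter_upwards [hsmall, self_mem_nhdsWithin] with θ hθ (hθ0 : 0 < θ) v hv s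
    have hdrift : θ * (c * L / 2) ≤ -m₁ := ((lt_div_iff₀ (by positivity)).1 hθ).le
    have hdiff : (m₂ - 1) * heatSS v s ≤ c * L * heatS v s + e := by
      calc (m₂ - 1) * heatSS v s ≤ |m₂ - 1| * |heatSS v s| := by
            rw [← abs_mul]
            exact le_abs_self _
        _ ≤ c * (L * heatS v s + 1 / (√v ^ 3 * L)) := by
            gcongr
            · linarith
            · exact abs_heatSS_le_mul_heatS_add (hτ.trans_le hv) s hL0
        _ ≤ c * (L * heatS v s + 1 / (√τ ^ 3 * L)) := by gcongr
        _ = c * L * heatS v s + e := by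
            rw [hL]
            field_simp
    nlinarith [mul_le_mul_of_nonneg_left hdiff (by positivity : 0 ≤ θ ^ 2 / 2),
      mul_le_mul_of_nonneg_right hdrift (mul_nonneg hθ0.le (heatS_nonneg v s))]

lemma eventually_sum_mul_heat_le {τ e : ℝ} (hτ : 0 < τ) (he : 0 < e) (hw : IsDist w)
    (hu : IsNearDiffusive w u (τ * e)) : ∀ᶠ θ in 𝓝[>] 0, ∀ v, τ ≤ v → ∀ s,
      ∑ y, w y * heat v (s + θ * u y) ≤ heat (v + θ ^ 2) s + e * θ ^ 2 := by
  set m₃ := ∑ y, w y * |u y| ^ 3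
  have hm₃0 : 0 ≤ m₃ := Finset.sum_nonneg fun y _ => mul_nonneg (hw.1 y) (by positivity)
  have hsmall : ∀ᶠ θ in 𝓝[>] (0 : ℝ), 2 / √τ ^ 3 * m₃ * θ + 1 / τ ^ 2 * θ ^ 2 < e / 2 := by
    have hcont : Continuous fun θ : ℝ => 2 / √τ ^ 3 * m₃ * θ + 1 / τ ^ 2 * θ ^ 2 := by fun_prop
    exact (hcont.tendsto' 0 0 (by simp)).mono_left nhdsWithin_le_nhds
      |>.eventually_lt_const (half_pos he)
  filter_upwards [eventually_drift_add_diffusion_le hτ he hu.1 hu.2, hsmall, self_mem_nhdsWithin]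
    with θ hdrift hθ (hθ0 : 0 < θ) v hv s
  have : 0 < √τ := sqrt_pos.2 hτ
  have hspace := sum_mul_heat_add_mul_le hw u (hτ.trans_le hv) hθ0.le s
  have htime := le_heat_add_time (hτ.trans_le hv) s (sq_nonneg θ)
  have hrem : 2 / √v ^ 3 * θ ^ 3 * m₃ + 1 / v ^ 2 * (θ ^ 2) ^ 2 ≤ e / 2 * θ ^ 2 := by
    calc 2 / √v ^ 3 * θ ^ 3 * m₃ + 1 / v ^ 2 * (θ ^ 2) ^ 2
        ≤ 2 / √τ ^ 3 * θ ^ 3 * m₃ + 1 / τ ^ 2 * (θ ^ 2) ^ 2 := by gcongr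
      _ = (2 / √τ ^ 3 * m₃ * θ + 1 / τ ^ 2 * θ ^ 2) * θ ^ 2 := by ring
      _ ≤ e / 2 * θ ^ 2 := by gcongr
  linarith [hdrift v hv s]

lemma ite_lt_le_heat_add (v t ρ s : ℝ) :
    (if t < s then 1 else 0) ≤ heat v (s - ρ) + gcdf (-((t - ρ) / √v)) := by
  split_ifs with hts
  · have : heat v (t - ρ) ≤ heat v (s - ρ) := monotone_heat v (by linarith)
    rw [gcdf_neg]
    linarith [show heat v (t - ρ) = gcdf ((t - ρ) / √v) from rfl]
  · exact add_nonneg (heat_nonneg _ _) (gcdf_nonneg _)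

lemma exists_heat_add_gcdf_lt {t c : ℝ} (h : gcdf (-t) < c) :
    ∃ ρ τ, 0 < τ ∧ heat (τ + 1) (-ρ) + gcdf (-((t - ρ) / √τ)) < c := by
  obtain ⟨ρ, hρ, hρt⟩ : ∃ ρ, gcdf (-ρ) < c ∧ ρ < t :=
    ((((continuous_gcdf.comp continuous_neg).tendsto t).mono_left nhdsWithin_le_nhds
      |>.eventually_lt_const h).and (self_mem_nhdsWithin (s := Iio t))).exists
  have hstart : Tendsto (fun τ => heat (τ + 1) (-ρ)) (𝓝[>] 0) (𝓝 (gcdf (-ρ))) := by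
    have hcont : ContinuousAt (fun τ : ℝ => heat (τ + 1) (-ρ)) 0 :=
      continuous_gcdf.continuousAt.comp (continuousAt_const.div (by fun_prop) (by simp))
    simpa [heat] using hcont.tendsto.mono_left nhdsWithin_le_nhds
  have hsqrt : Tendsto Real.sqrt (𝓝[>] 0) (𝓝[>] 0) :=
    tendsto_nhdsWithin_iff.2 ⟨(continuous_sqrt.tendsto' 0 0 sqrt_zero).mono_left nhdsWithin_le_nhds,
      eventually_mem_of_tendsto_nhdsWithin tendsto_id |>.mono fun _ => sqrt_pos.2⟩
  have hend : Tendsto (fun τ : ℝ => gcdf (-((t - ρ) / √τ))) (𝓝[>] 0) (𝓝 0) :=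
    tendsto_gcdf_atBot.comp (tendsto_neg_atTop_atBot.comp
      ((tendsto_inv_nhdsGT_zero.comp hsqrt).const_mul_atTop (sub_pos.2 hρt)))
  obtain ⟨τ, hτ, hτ0⟩ := (((hstart.add hend).eventually_lt_const (by rwa [add_zero])).and
    self_mem_nhdsWithin).exists
  exact ⟨ρ, τ, hτ0, hτ⟩

lemma tendsto_inv_sqrt_natCast : Tendsto (fun n : ℕ => (√n)⁻¹) atTop (𝓝[>] 0) :=
  tendsto_inv_atTop_nhdsGT_zero.comp (tendsto_sqrt_atTop.comp tendsto_natCast_atTop_atTop)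

omit [Fintype X] in
theorem exists_eventually_feedbackExp_ite_le [Finite X] {t c : ℝ} (h : gcdf (-t) < c) :
    ∃ δ > 0, ∀ W ξ : X → Y → ℝ, IsChannel W → (∀ x, IsNearDiffusive (W x) (ξ x) δ) →
      ∀ᶠ n : ℕ in atTop, ∀ f,
        feedbackExp W f n (fun y => if t * √n < pathSum ξ f y then 1 else 0) ≤ c := by
  obtain ⟨ρ, τ, hτ, hc⟩ := exists_heat_add_gcdf_lt h
  set e := c - (heat (τ + 1) (-ρ) + gcdf (-((t - ρ) / √τ))) with he_def
  have he : 0 < e := sub_pos.2 hc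
  refine ⟨τ * e, by positivity, fun W ξ hW hξ => ?_⟩
  have hstep := tendsto_inv_sqrt_natCast.eventually
    (eventually_all.2 fun x => eventually_sum_mul_heat_le hτ he (hW x) (hξ x))
  filter_upwards [hstep, eventually_gt_atTop 0] with n hstep hn f
  have hn0 : (0 : ℝ) < n := Nat.cast_pos.2 hn
  have hpayoff (y : Fin n → Y) : (if t * √n < pathSum ξ f y then 1 else 0) ≤
      heat τ ((√n)⁻¹ * pathSum ξ f y - ρ) + gcdf (-((t - ρ) / √τ)) := by
    simpa only [lt_inv_mul_iff₀' (sqrt_pos.2 hn0)] using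
      ite_lt_le_heat_add τ t ρ ((√n)⁻¹ * pathSum ξ f y)
  have hvalue := feedbackExp_pathSum_le hW (fun x y => (√n)⁻¹ * ξ x y) f
    (fun k s => heat (τ + (n - k) / n) (s - ρ)) (e * (√n)⁻¹ ^ 2) n fun k hk x s => by
      have hk' : (k : ℝ) + 1 ≤ n := by exact_mod_cast hk
      have htime : τ + ((n : ℝ) - (k + 1)) / n + (√n)⁻¹ ^ 2 = τ + (n - k) / n := by
        rw [inv_pow, sq_sqrt hn0.le]
        field_simp
        ring
      simpa only [htime, Nat.cast_succ, add_sub_right_comm] using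
        hstep x (τ + (n - (k + 1)) / n)
          (le_add_of_nonneg_right (div_nonneg (by linarith) hn0.le)) (s - ρ)
  calc feedbackExp W f n (fun y => if t * √n < pathSum ξ f y then 1 else 0)
      ≤ feedbackExp W f n (fun y => heat τ ((√n)⁻¹ * pathSum ξ f y - ρ))
          + gcdf (-((t - ρ) / √τ)) := by
        rw [← feedbackExp_const hW f n (gcdf _), ← feedbackExp_add]
        exact feedbackExp_mono hW f hpayoff
    _ ≤ heat (τ + 1) (-ρ) + e + gcdf (-((t - ρ) / √τ)) := by
        simp only [pathSum_const_mul, sub_self, zero_div, add_zero, Nat.cast_zero, sub_zero,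
          div_self hn0.ne', zero_sub, inv_pow, sq_sqrt hn0.le] at hvalue
        field_simp at hvalue ⊢
        linarith
    _ = c := by
        rw [he_def]
        ring

end ControlledSum

/-! ### The converse -/

section Converse

/-- The information density of the channel `W` relative to the output distribution `q`. -/
def infoDensity (W : X → Y → ℝ) (q : Y → ℝ) (x : X) (y : Y) : ℝ := log (W x y / q y)

variable {W : X → Y → ℝ} {q : Y → ℝ}

omit [Fintype X] in
lemma prod_le_exp_pathSum_mul_prod (hW : IsChannel W) (hq : ∀ y, 0 < q y) (f : List Y → X) {n : ℕ}
    (y : Fin n → Y) : ∏ k : Fin n, W (f ((List.ofFn y).take (k : ℕ))) (y k) ≤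
      exp (pathSum (infoDensity W q) f y) * ∏ k, q (y k) := by
  rw [pathSum, exp_sum, ← Finset.prod_mul_distrib]
  refine Finset.prod_le_prod (fun _ _ => (hW _).1 _) fun k _ => ?_
  rw [← div_le_iff₀ (hq _)]
  exact le_exp_log _

lemma sum_prod_eq_one {n : ℕ} {p : Fin n → Y → ℝ} (hp : ∀ k, ∑ y, p k y = 1) :
    ∑ y : Fin n → Y, ∏ k, p k (y k) = 1 := by
  rw [← Fintype.piFinset_univ, ← Finset.prod_univ_sum]
  simp [hp]

omit [Fintype X] in
lemma one_le_feedbackExp_error_add (hW : IsChannel W) (hq : ∀ y, 0 < q y) (f : List Y → X)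
    {n : ℕ} (p : (Fin n → Y) → Prop) [DecidablePred p] (γ : ℝ) :
    1 ≤ feedbackExp W f n (fun y => if p y then 0 else 1)
      + feedbackExp W f n (fun y => if γ < pathSum (infoDensity W q) f y then 1 else 0)
      + exp γ * ∑ y, (∏ k, q (y k)) * (if p y then 1 else 0) := by
  refine (feedbackExp_const hW f n 1).symm.trans_le ?_
  simp only [feedbackExp, Finset.mul_sum, ← Finset.sum_add_distrib]
  refine Finset.sum_le_sum fun y _ => ?_
  have hp : 0 ≤ ∏ k : Fin n, W (f ((List.ofFn y).take (k : ℕ))) (y k) :=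
    Finset.prod_nonneg fun _ _ => (hW _).1 _
  have hq' : 0 ≤ ∏ k, q (y k) := Finset.prod_nonneg fun _ _ => (hq _).le
  rcases lt_or_ge γ (pathSum (infoDensity W q) f y) with hγ | hγ
  · rw [if_pos hγ]
    split_ifs <;> nlinarith [exp_pos γ]
  · have hle : ∏ k : Fin n, W (f ((List.ofFn y).take (k : ℕ))) (y k) ≤ exp γ * ∏ k, q (y k) :=
      (prod_le_exp_pathSum_mul_prod hW hq f y).trans (by gcongr)
    rw [if_neg hγ.not_gt]
    split_ifs <;> linarith

omit [Fintype X] in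
lemma one_sub_sub_exp_div_le_errProb (hW : IsChannel W) (hq : ∀ y, 0 < q y)
    (hq1 : ∑ y, q y = 1) {n M : ℕ} (hM : 0 < M) (enc : Fin M → List Y → X)
    (dec : (Fin n → Y) → Fin M) {γ β : ℝ} (hβ : ∀ m, feedbackExp W (enc m) n
      (fun y => if γ < pathSum (infoDensity W q) (enc m) y then 1 else 0) ≤ β) :
    1 - β - exp γ / M ≤ errProb W n M enc dec := by
  have : (0 : ℝ) < M := Nat.cast_pos.2 hM
  have hcells :
      ∑ m : Fin M, ∑ y : Fin n → Y, (∏ k, q (y k)) * (if dec y = m then 1 else 0) = 1 := by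
    rw [Finset.sum_comm]
    simp [sum_prod_eq_one fun _ => hq1]
  have hsum := Finset.sum_le_sum fun m (_ : m ∈ Finset.univ) =>
    (one_le_feedbackExp_error_add hW hq (enc m) (dec · = m) γ).trans
      (add_le_add_left (add_le_add_right (hβ m) _) _)
  simp only [Finset.sum_add_distrib, ← Finset.mul_sum, hcells, Finset.sum_const,
    Finset.card_univ, Fintype.card_fin, nsmul_eq_mul, mul_one] at hsum
  calc 1 - β - exp γ / M = (M : ℝ)⁻¹ * (M - M * β - exp γ) := by field_simp
    _ ≤ errProb W n M enc dec := by
        rw [errProb_eq_sum_feedbackExp]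
        gcongr
        linarith

lemma tendsto_sqrt_natCast_mul {V : ℝ} (hV : 0 < V) :
    Tendsto (fun n : ℕ => √(n * V)) atTop atTop :=
  tendsto_sqrt_atTop.comp (tendsto_natCast_atTop_atTop.atTop_mul_const hV)

omit [Fintype X] in
theorem exists_eventually_le_exp_of_errProb_le [Finite X] {c t : ℝ} (h : c < gcdf t) :
    ∃ δ > 0, ∀ (W : X → Y → ℝ) (q : Y → ℝ) (C V : ℝ), IsChannel W → (∀ y, 0 < q y) →
      ∑ y, q y = 1 → 0 < V →
      (∀ x, IsNearDiffusive (W x) (fun y => (infoDensity W q x y - C) / √V) δ) →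
      ∀ᶠ n : ℕ in atTop, ∀ M : ℕ, 0 < M → ∀ enc dec, errProb W n M enc dec ≤ c →
        (M : ℝ) ≤ exp (n * C + t * √(n * V)) := by
  obtain ⟨t', ht', ht't⟩ : ∃ t', c < gcdf t' ∧ t' < t :=
    (((continuous_gcdf.tendsto t).mono_left nhdsWithin_le_nhds |>.eventually_const_lt h).and
      (self_mem_nhdsWithin (s := Iio t))).exists
  obtain ⟨β, htβ, hβc⟩ : ∃ β, gcdf (-t') < β ∧ β < 1 - c :=
    exists_between (by linarith [gcdf_neg t'])
  obtain ⟨δ, hδ, htail⟩ := exists_eventually_feedbackExp_ite_le (X := X) (Y := Y) htβ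
  refine ⟨δ, hδ, fun W q C V hW hq hq1 hV hdiff => ?_⟩
  have hsmall : ∀ᶠ n : ℕ in atTop, exp (-((t - t') * √(n * V))) < 1 - c - β :=
    (tendsto_exp_neg_atTop_nhds_zero.comp ((tendsto_sqrt_natCast_mul hV).const_mul_atTop
      (sub_pos.2 ht't))).eventually_lt_const (by linarith)
  filter_upwards [htail W _ hW hdiff, hsmall] with n htail hsmall M hM enc dec herr
  by_contra! hlt
  have htail' (m : Fin M) : feedbackExp W (enc m) n (fun y =>
      if n * C + t' * √(n * V) < pathSum (infoDensity W q) (enc m) y then 1 else 0) ≤ β := by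
    simpa only [pathSum_sub_div, lt_div_iff₀ (sqrt_pos.2 hV), lt_sub_iff_add_lt', mul_assoc,
      ← sqrt_mul (Nat.cast_nonneg n)] using htail (enc m)
  have hratio : exp (n * C + t' * √(n * V)) / M ≤ exp (-((t - t') * √(n * V))) := by
    rw [div_le_iff₀ (Nat.cast_pos.2 hM)]
    calc exp (n * C + t' * √(n * V))
        = exp (-((t - t') * √(n * V))) * exp (n * C + t * √(n * V)) := by
          rw [← exp_add]
          ring_nf
      _ ≤ exp (-((t - t') * √(n * V))) * M := by gcongr
  linarith [one_sub_sub_exp_div_le_errProb hW hq hq1 hM enc dec htail']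

end Converse

/-! ### Relative entropy -/

section RelEntropy

/-- The relative entropy (Kullback–Leibler divergence), in nats, of two probability mass functions
on a finite alphabet. -/
def relEntropy (p q : Y → ℝ) : ℝ := ∑ y, p y * log (p y / q y)

variable {p q : Y → ℝ}

lemma relEntropy_eq_sum_klFun (hp : ∑ y, p y = 1) (hq : ∀ y, 0 < q y) (hq1 : ∑ y, q y = 1) :
    relEntropy p q = ∑ y, q y * klFun (p y / q y) := by
  have h (y : Y) : q y * klFun (p y / q y) = p y * log (p y / q y) + q y - p y := by
    have := (hq y).ne'
    rw [klFun]
    field_simp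
  simp only [h, Finset.sum_sub_distrib, Finset.sum_add_distrib, hp, hq1, add_sub_cancel_right]
  rfl

lemma relEntropy_nonneg (hp : IsDist p) (hq : ∀ y, 0 < q y) (hq1 : ∑ y, q y = 1) :
    0 ≤ relEntropy p q := by
  rw [relEntropy_eq_sum_klFun hp.2 hq hq1]
  exact Finset.sum_nonneg fun y _ =>
    mul_nonneg (hq y).le (klFun_nonneg (div_nonneg (hp.1 y) (hq y).le))

lemma relEntropy_pos (hp : IsDist p) (hq : ∀ y, 0 < q y) (hq1 : ∑ y, q y = 1) (hne : p ≠ q) :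
    0 < relEntropy p q := by
  obtain ⟨y, hy⟩ := Function.ne_iff.1 hne
  have hdiv (y : Y) : 0 ≤ p y / q y := div_nonneg (hp.1 y) (hq y).le
  rw [relEntropy_eq_sum_klFun hp.2 hq hq1]
  refine Finset.sum_pos' (fun y _ => mul_nonneg (hq y).le (klFun_nonneg (hdiv y)))
    ⟨y, Finset.mem_univ y, mul_pos (hq y) ((klFun_nonneg (hdiv y)).lt_of_ne' ?_)⟩
  rwa [Ne, klFun_eq_zero_iff (hdiv y), div_eq_one_iff_eq (hq y).ne']

lemma klFun_le_sub_one_sq {x : ℝ} (hx : 0 ≤ x) : klFun x ≤ (x - 1) ^ 2 := by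
  rcases hx.eq_or_lt with rfl | hx
  · simp [klFun]
  · rw [klFun]
    nlinarith [log_le_sub_one_of_pos hx]

lemma relEntropy_le_sum_sq_div (hp : IsDist p) (hq : ∀ y, 0 < q y) (hq1 : ∑ y, q y = 1) :
    relEntropy p q ≤ ∑ y, (p y - q y) ^ 2 / q y := by
  rw [relEntropy_eq_sum_klFun hp.2 hq hq1]
  refine Finset.sum_le_sum fun y _ => ?_
  calc q y * klFun (p y / q y) ≤ q y * (p y / q y - 1) ^ 2 := by
        gcongr
        · exact (hq y).le
        · exact klFun_le_sub_one_sq (div_nonneg (hp.1 y) (hq y).le)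
    _ = (p y - q y) ^ 2 / q y := by
        have := (hq y).ne'
        field_simp

lemma relEntropy_le_of_abs_log_le {κ : ℝ} (hp : IsDist p) (hκ : ∀ y, |log (p y / q y)| ≤ κ) :
    relEntropy p q ≤ κ :=
  calc relEntropy p q ≤ ∑ y, p y * κ := Finset.sum_le_sum fun y _ =>
        mul_le_mul_of_nonneg_left ((le_abs_self _).trans (hκ y)) (hp.1 y)
    _ = κ := by rw [← Finset.sum_mul, hp.2, one_mul]

lemma abs_exp_neg_sub_le {κ l : ℝ} (hl : |l| ≤ κ) (hκ : κ ≤ 1) :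
    |exp (-l) - (1 - l + l ^ 2 / 2)| ≤ κ * l ^ 2 := by
  have hb := Real.exp_bound (x := -l) (n := 3) (by rw [abs_neg]; linarith) (by norm_num)
  norm_num [Finset.sum_range_succ, Nat.factorial, ← sub_eq_add_neg] at hb
  calc |exp (-l) - (1 - l + l ^ 2 / 2)| ≤ |l| * l ^ 2 * (2 / 9) := by
        rwa [← sq_abs l, ← pow_succ', sq_abs]
    _ ≤ κ * l ^ 2 := by
        nlinarith [mul_le_mul_of_nonneg_right hl (sq_nonneg l),
          mul_nonneg (abs_nonneg l) (sq_nonneg l)]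

lemma abs_relEntropy_sub_half_sum_sq_le {κ : ℝ} (hp : ∀ y, 0 < p y) (hq : ∀ y, 0 < q y)
    (hsum : ∑ y, p y = ∑ y, q y) (hκ : ∀ y, |log (p y / q y)| ≤ κ) (hκ1 : κ ≤ 1) :
    |relEntropy p q - (∑ y, p y * log (p y / q y) ^ 2) / 2| ≤
      κ * ∑ y, p y * log (p y / q y) ^ 2 := by
  have hq' (y : Y) : q y = p y * exp (-log (p y / q y)) := by
    rw [exp_neg, exp_log (div_pos (hp y) (hq y)), inv_div, mul_div_cancel₀ _ (hp y).ne']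
  have hexpand : relEntropy p q - (∑ y, p y * log (p y / q y) ^ 2) / 2 = ∑ y, p y *
      (exp (-log (p y / q y)) - (1 - log (p y / q y) + log (p y / q y) ^ 2 / 2)) := by
    simp only [mul_sub, mul_add, ← hq', Finset.sum_sub_distrib, Finset.sum_add_distrib, hsum,
      relEntropy, mul_one, mul_div_assoc', ← Finset.sum_div]
    ring
  rw [hexpand, Finset.mul_sum]
  refine (Finset.abs_sum_le_sum_abs _ _).trans (Finset.sum_le_sum fun y _ => ?_)
  rw [abs_mul, abs_of_pos (hp y), mul_left_comm]
  exact mul_le_mul_of_nonneg_left (abs_exp_neg_sub_le (hκ y) hκ1) (hp y).le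

lemma abs_variance_sub_two_mul_relEntropy_le {κ : ℝ} (hp : ∀ y, 0 < p y) (hp1 : ∑ y, p y = 1)
    (hq : ∀ y, 0 < q y) (hq1 : ∑ y, q y = 1) (hκ : ∀ y, |log (p y / q y)| ≤ κ)
    (hκ1 : κ ≤ 1 / 9) :
    |∑ y, p y * log (p y / q y) ^ 2 - relEntropy p q ^ 2 - 2 * relEntropy p q| ≤
      9 * κ * relEntropy p q := by
  have hpd : IsDist p := ⟨fun y => (hp y).le, hp1⟩
  have hD0 := relEntropy_nonneg hpd hq hq1
  have hDκ := relEntropy_le_of_abs_log_le hpd hκ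
  have hmoment := abs_le.1 <|
    abs_relEntropy_sub_half_sum_sq_le hp hq (hp1.trans hq1.symm) hκ (by linarith)
  set D := relEntropy p q
  set E := ∑ y, p y * log (p y / q y) ^ 2
  have hE0 : 0 ≤ E := Finset.sum_nonneg fun y _ => mul_nonneg (hp y).le (sq_nonneg _)
  have hE4 : E ≤ 4 * D := by nlinarith
  have hκE : κ * E ≤ κ * (4 * D) := mul_le_mul_of_nonneg_left hE4 (hD0.trans hDκ)
  have hDD : D ^ 2 ≤ κ * D := by
    rw [sq]
    gcongr
  rw [abs_le]
  constructor <;> nlinarith [sq_nonneg D]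

end RelEntropy

/-! ### Capacity -/

section Capacity

lemma isDist_outDist {P : X → ℝ} {W : X → Y → ℝ} (hP : IsDist P) (hW : IsChannel W) :
    IsDist (outDist P W) := by
  refine ⟨fun y => Finset.sum_nonneg fun x _ => mul_nonneg (hP.1 x) ((hW x).1 y), ?_⟩
  simp only [outDist]
  rw [Finset.sum_comm]
  simp only [← Finset.mul_sum, (hW _).2, mul_one, hP.2]

omit [Fintype Y] in
lemma outDist_pos {P : X → ℝ} {W : X → Y → ℝ} (hP : IsDist P) (hW : ∀ x y, 0 < W x y) (y : Y) :
    0 < outDist P W y := by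
  obtain ⟨x, -, hx⟩ := Finset.exists_ne_zero_of_sum_ne_zero (hP.2.trans_ne one_ne_zero)
  exact Finset.sum_pos' (fun x _ => mul_nonneg (hP.1 x) (hW x y).le)
    ⟨x, Finset.mem_univ x, mul_pos ((hP.1 x).lt_of_ne' hx) (hW x y)⟩

lemma mutInfo_eq_sum_relEntropy (P : X → ℝ) (W : X → Y → ℝ) :
    mutInfo P W = ∑ x, P x * relEntropy (W x) (outDist P W) := by
  simp only [mutInfo, relEntropy, Finset.mul_sum, mul_assoc]

lemma sum_mul_relEntropy_eq {P : X → ℝ} {W : X → Y → ℝ} {q : Y → ℝ} (hP : IsDist P)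
    (hW : ∀ x y, 0 < W x y) (hq : ∀ y, 0 < q y) :
    ∑ x, P x * relEntropy (W x) q = mutInfo P W + relEntropy (outDist P W) q := by
  have hout : relEntropy (outDist P W) q =
      ∑ x, ∑ y, P x * W x y * log (outDist P W y / q y) := by
    rw [Finset.sum_comm]
    simp only [relEntropy, ← Finset.sum_mul]
    rfl
  rw [hout, mutInfo]
  simp only [relEntropy, Finset.mul_sum, ← Finset.sum_add_distrib]
  refine Finset.sum_congr rfl fun x _ => Finset.sum_congr rfl fun y _ => ?_
  have hy := outDist_pos hP hW y
  rw [← mul_add, ← log_mul (div_pos (hW x y) hy).ne' (div_pos hy (hq y)).ne',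
    div_mul_div_cancel₀ hy.ne', mul_assoc]

variable {W : X → Y → ℝ}

lemma continuousOn_mutInfo (hW : ∀ x y, 0 < W x y) :
    ContinuousOn (fun P => mutInfo P W) (stdSimplex ℝ X) := by
  unfold mutInfo
  refine continuousOn_finsetSum _ fun x _ => continuousOn_finsetSum _ fun y _ => ?_
  have hout : Continuous fun P : X → ℝ => outDist P W y := by
    unfold outDist
    fun_prop
  refine ContinuousOn.mul (by fun_prop) (ContinuousOn.log ?_ fun P hP => ?_)
  · exact continuousOn_const.div hout.continuousOn fun P hP => (outDist_pos hP hW y).ne'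
  · exact (div_pos (hW x y) (outDist_pos hP hW y)).ne'

lemma mutInfo_le_capacity {P : X → ℝ} (hW : ∀ x y, 0 < W x y) (hP : IsDist P) :
    mutInfo P W ≤ capacity W :=
  le_csSup ((isCompact_stdSimplex ℝ X).image_of_continuousOn (continuousOn_mutInfo hW)).bddAbove
    ⟨P, hP, rfl⟩

lemma capacity_pos (hWc : IsChannel W) (hW : ∀ x y, 0 < W x y) {P : X → ℝ} (hP : IsDist P)
    {x : X} (hx : 0 < P x) (hne : W x ≠ outDist P W) : 0 < capacity W := by
  refine lt_of_lt_of_le ?_ (mutInfo_le_capacity hW hP)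
  have hq := outDist_pos hP hW
  have hq1 := (isDist_outDist hP hWc).2
  rw [mutInfo_eq_sum_relEntropy]
  exact Finset.sum_pos' (fun x _ => mul_nonneg (hP.1 x) (relEntropy_nonneg (hWc x) hq hq1))
    ⟨x, Finset.mem_univ x, mul_pos hx (relEntropy_pos (hWc x) hq hq1 hne)⟩

lemma sum_mul_relEntropy_le_capacity_add (hWc : IsChannel W) (hW : ∀ x y, 0 < W x y)
    {P : X → ℝ} (hP : IsDist P) {q : Y → ℝ} (hq : ∀ y, 0 < q y) (hq1 : ∑ y, q y = 1) :
    ∑ x, P x * relEntropy (W x) q ≤ capacity W + ∑ y, (outDist P W y - q y) ^ 2 / q y := by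
  rw [sum_mul_relEntropy_eq hP hW hq]
  exact add_le_add (mutInfo_le_capacity hW hP)
    (relEntropy_le_sum_sq_div (isDist_outDist hP hWc) hq hq1)

/-- Moving mass `t` from an optimal `P` to `x` changes the mutual information by
`t * (relEntropy - capacity)` to first order, and the output distribution only to second order. -/
lemma relEntropy_outDist_le_capacity (hWc : IsChannel W) (hW : ∀ x y, 0 < W x y) {P : X → ℝ}
    (hP : P ∈ capacityAchievers W) (x : X) : relEntropy (W x) (outDist P W) ≤ capacity W := by
  have hperturb {t : ℝ} (ht0 : 0 < t) (ht1 : t ≤ 1) : relEntropy (W x) (outDist P W) ≤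
      capacity W + t * ∑ y, (W x y - outDist P W y) ^ 2 / outDist P W y := by
    set Q : X → ℝ := (1 - t) • P + t • Pi.single x 1 with hQ
    have hQd : IsDist Q := convex_stdSimplex ℝ X hP.1 (single_mem_stdSimplex ℝ x)
      (by linarith) ht0.le (by ring)
    have hlin (g : X → ℝ) : ∑ x', Q x' * g x' = (1 - t) * ∑ x', P x' * g x' + t * g x := by
      simp [hQ, add_mul, Finset.sum_add_distrib, mul_assoc, ← Finset.mul_sum, Pi.single_apply]
    have hout (y : Y) : outDist Q W y - outDist P W y = t * (W x y - outDist P W y) := by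
      linarith [show outDist Q W y = (1 - t) * outDist P W y + t * W x y from hlin fun x' => W x' y]
    have hle := sum_mul_relEntropy_le_capacity_add hWc hW hQd (outDist_pos hP.1 hW)
      (isDist_outDist hP.1 hWc).2
    rw [hlin, ← mutInfo_eq_sum_relEntropy, hP.2] at hle
    simp only [hout, mul_pow, mul_div_assoc, ← Finset.mul_sum] at hle ⊢
    refine le_of_mul_le_mul_left ?_ ht0
    linarith
  have hlim : Tendsto (fun t : ℝ => capacity W +
      t * ∑ y, (W x y - outDist P W y) ^ 2 / outDist P W y) (𝓝[>] 0) (𝓝 (capacity W)) :=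
    (Continuous.tendsto' (by fun_prop) _ _ (by simp)).mono_left nhdsWithin_le_nhds
  exact ge_of_tendsto hlim (mem_of_superset (Ioc_mem_nhdsGT one_pos) fun t ht =>
    hperturb ht.1 ht.2)

variable [Nonempty X]

lemma nonempty_capacityAchievers (hW : ∀ x y, 0 < W x y) : (capacityAchievers W).Nonempty := by
  obtain ⟨P, hP, hmax⟩ := (isCompact_stdSimplex ℝ X).exists_isMaxOn
    ⟨_, single_mem_stdSimplex ℝ (Classical.arbitrary X)⟩ (continuousOn_mutInfo hW)
  refine ⟨P, hP, le_antisymm (mutInfo_le_capacity hW hP) (csSup_le ⟨_, P, hP, rfl⟩ ?_)⟩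
  rintro _ ⟨P', hP', rfl⟩
  exact hmax hP'

lemma exists_mem_capacityAchievers_outDist_eq_qStar (hW : ∀ x y, 0 < W x y) :
    ∃ P ∈ capacityAchievers W, outDist P W = qStar W := by
  have h := nonempty_capacityAchievers hW
  exact ⟨h.choose, h.choose_spec, by rw [qStar, dif_pos h]⟩

lemma qStar_pos (hW : ∀ x y, 0 < W x y) (y : Y) : 0 < qStar W y := by
  obtain ⟨P, hP, hPq⟩ := exists_mem_capacityAchievers_outDist_eq_qStar hW
  exact hPq ▸ outDist_pos hP.1 hW y

lemma sum_qStar (hWc : IsChannel W) (hW : ∀ x y, 0 < W x y) : ∑ y, qStar W y = 1 := by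
  obtain ⟨P, hP, hPq⟩ := exists_mem_capacityAchievers_outDist_eq_qStar hW
  exact hPq ▸ (isDist_outDist hP.1 hWc).2

lemma relEntropy_qStar_le_capacity (hWc : IsChannel W) (hW : ∀ x y, 0 < W x y) (x : X) :
    relEntropy (W x) (qStar W) ≤ capacity W := by
  obtain ⟨P, hP, hPq⟩ := exists_mem_capacityAchievers_outDist_eq_qStar hW
  exact hPq ▸ relEntropy_outDist_le_capacity hWc hW hP x

lemma relEntropy_qStar_eq_capacity (hWc : IsChannel W) (hW : ∀ x y, 0 < W x y) {P : X → ℝ}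
    (hP : P ∈ capacityAchievers W) {x : X} (hx : P x ≠ 0) :
    relEntropy (W x) (qStar W) = capacity W := by
  have hgap : ∀ x ∈ Finset.univ, 0 ≤ P x * (capacity W - relEntropy (W x) (qStar W)) :=
    fun x _ => mul_nonneg (hP.1.1 x) (sub_nonneg.2 (relEntropy_qStar_le_capacity hWc hW x))
  have hsum : ∑ x, P x * (capacity W - relEntropy (W x) (qStar W)) = 0 := by
    refine le_antisymm ?_ (Finset.sum_nonneg hgap)
    have := relEntropy_nonneg (isDist_outDist hP.1 hWc) (qStar_pos hW) (sum_qStar hWc hW)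
    simp only [mul_sub, Finset.sum_sub_distrib, ← Finset.sum_mul, hP.1.2,
      sum_mul_relEntropy_eq hP.1 hW (qStar_pos hW), hP.2]
    linarith
  have := (Finset.sum_eq_zero_iff_of_nonneg hgap).1 hsum x (Finset.mem_univ x)
  exact (sub_eq_zero.1 ((mul_eq_zero.1 this).resolve_left hx)).symm

end Capacity

/-! ### Dispersion of channels with small information density -/

section SmallDensity

variable [Nonempty X] {W : X → Y → ℝ} {κ : ℝ}

lemma abs_nu_sub_two_mul_capacity_le (hWc : IsChannel W) (hW : ∀ x y, 0 < W x y)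
    (hκ : ∀ x y, |iStar W x y| ≤ κ) (hκ1 : κ ≤ 1 / 9) {x : X}
    (hx : relEntropy (W x) (qStar W) = capacity W) :
    |nu W x - 2 * capacity W| ≤ 9 * κ * capacity W :=
  hx ▸ abs_variance_sub_two_mul_relEntropy_le (hW x) (hWc x).2 (qStar_pos hW) (sum_qStar hWc hW)
    (hκ x) hκ1

lemma abs_sum_mul_nu_sub_two_mul_capacity_le (hWc : IsChannel W) (hW : ∀ x y, 0 < W x y)
    (hκ : ∀ x y, |iStar W x y| ≤ κ) (hκ1 : κ ≤ 1 / 9) {P : X → ℝ}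
    (hP : P ∈ capacityAchievers W) :
    |∑ x, P x * nu W x - 2 * capacity W| ≤ 9 * κ * capacity W := by
  have hcentre :
      ∑ x, P x * nu W x - 2 * capacity W = ∑ x, P x * (nu W x - 2 * capacity W) := by
    simp only [mul_sub, Finset.sum_sub_distrib, ← Finset.sum_mul, hP.1.2, one_mul]
  calc |∑ x, P x * nu W x - 2 * capacity W| ≤ ∑ x, |P x * (nu W x - 2 * capacity W)| := by
        rw [hcentre]
        exact Finset.abs_sum_le_sum_abs _ _
    _ ≤ ∑ x, P x * (9 * κ * capacity W) := by
        refine Finset.sum_le_sum fun x _ => ?_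
        rw [abs_mul, abs_of_nonneg (hP.1.1 x)]
        by_cases hx : P x = 0
        · simp [hx]
        · exact mul_le_mul_of_nonneg_left (abs_nu_sub_two_mul_capacity_le hWc hW hκ hκ1
            (relEntropy_qStar_eq_capacity hWc hW hP hx)) (hP.1.1 x)
    _ = 9 * κ * capacity W := by rw [← Finset.sum_mul, hP.1.2, one_mul]

lemma setOf_sum_mul_nu_subset_Icc (hWc : IsChannel W) (hW : ∀ x y, 0 < W x y)
    (hκ : ∀ x y, |iStar W x y| ≤ κ) (hκ1 : κ ≤ 1 / 9) :
    {v | ∃ P ∈ capacityAchievers W, v = ∑ x, P x * nu W x} ⊆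
      Icc (2 * capacity W - 9 * κ * capacity W) (2 * capacity W + 9 * κ * capacity W) := by
  rintro _ ⟨P, hP, rfl⟩
  exact mem_Icc_iff_abs_le.1 (abs_sub_comm (2 * capacity W) _ ▸
    abs_sum_mul_nu_sub_two_mul_capacity_le hWc hW hκ hκ1 hP)

lemma abs_Vmin_sub_two_mul_capacity_le (hWc : IsChannel W) (hW : ∀ x y, 0 < W x y)
    (hκ : ∀ x y, |iStar W x y| ≤ κ) (hκ1 : κ ≤ 1 / 9) :
    |Vmin W - 2 * capacity W| ≤ 9 * κ * capacity W := by
  have hsub := setOf_sum_mul_nu_subset_Icc hWc hW hκ hκ1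
  obtain ⟨P, hP⟩ := nonempty_capacityAchievers hW
  rw [abs_sub_comm]
  exact mem_Icc_iff_abs_le.2 ⟨le_csInf ⟨_, P, hP, rfl⟩ fun v hv => (hsub hv).1,
    (csInf_le (bddBelow_Icc.mono hsub) ⟨P, hP, rfl⟩).trans (hsub ⟨P, hP, rfl⟩).2⟩

lemma abs_Vmax_sub_two_mul_capacity_le (hWc : IsChannel W) (hW : ∀ x y, 0 < W x y)
    (hκ : ∀ x y, |iStar W x y| ≤ κ) (hκ1 : κ ≤ 1 / 9) :
    |Vmax W - 2 * capacity W| ≤ 9 * κ * capacity W := by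
  have hsub := setOf_sum_mul_nu_subset_Icc hWc hW hκ hκ1
  obtain ⟨P, hP⟩ := nonempty_capacityAchievers hW
  rw [abs_sub_comm]
  exact mem_Icc_iff_abs_le.2 ⟨(hsub ⟨P, hP, rfl⟩).1.trans
    (le_csSup (bddAbove_Icc.mono hsub) ⟨P, hP, rfl⟩), csSup_le ⟨_, P, hP, rfl⟩ fun v hv =>
    (hsub hv).2⟩

omit [Nonempty X] in
lemma sum_mul_iStar_sub_capacity_sq (hWc : IsChannel W) {x : X}
    (hx : relEntropy (W x) (qStar W) = capacity W) :
    ∑ y, W x y * (iStar W x y - capacity W) ^ 2 = nu W x := by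
  have hexpand (y : Y) : W x y * (iStar W x y - capacity W) ^ 2 = W x y * iStar W x y ^ 2
      - 2 * capacity W * (W x y * iStar W x y) + capacity W ^ 2 * W x y := by ring
  have hmean : ∑ y, W x y * iStar W x y = capacity W := hx
  simp only [hexpand, Finset.sum_add_distrib, Finset.sum_sub_distrib, ← Finset.mul_sum, hmean,
    (hWc x).2, nu]
  ring

lemma isNearDiffusive_iStar (hWc : IsChannel W) (hW : ∀ x y, 0 < W x y) (hC : 0 < capacity W)
    (hκ : ∀ x y, |iStar W x y| ≤ κ) (hκ1 : κ ≤ 1 / 9) {V : ℝ}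
    (hV : |V - 2 * capacity W| ≤ 9 * κ * capacity W) (x : X) :
    IsNearDiffusive (W x) (fun y => (iStar W x y - capacity W) / √V) (18 * κ) := by
  have hκC : κ * capacity W ≤ 1 / 9 * capacity W := by gcongr
  have hCV : capacity W ≤ V := by linarith [(abs_le.1 hV).1]
  have hV0 : 0 < V := hC.trans_le hCV
  have hmean : ∑ y, W x y * ((iStar W x y - capacity W) / √V) =
      (relEntropy (W x) (qStar W) - capacity W) / √V := by
    simp only [mul_div_assoc', mul_sub, ← Finset.sum_div, Finset.sum_sub_distrib,
      ← Finset.sum_mul, (hWc x).2, one_mul]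
    rfl
  refine ⟨?_, fun h => ?_⟩
  · rw [hmean]
    exact div_nonpos_of_nonpos_of_nonneg
      (sub_nonpos.2 (relEntropy_qStar_le_capacity hWc hW x)) (sqrt_nonneg V)
  · rw [hmean, div_eq_zero_iff, or_iff_left (sqrt_pos.2 hV0).ne', sub_eq_zero] at h
    have hnu := abs_le.1 (abs_nu_sub_two_mul_capacity_le hWc hW hκ hκ1 h)
    have hκ0 : 0 ≤ κ := by
      by_contra! hneg
      nlinarith [abs_nonneg (V - 2 * capacity W)]
    have hκV : κ * capacity W ≤ κ * V := by gcongr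
    simp only [div_pow, sq_sqrt hV0.le, mul_div_assoc', ← Finset.sum_div,
      sum_mul_iStar_sub_capacity_sq hWc h]
    rw [div_sub_one hV0.ne', abs_div, abs_of_pos hV0, div_le_iff₀ hV0, abs_le]
    constructor <;> linarith [abs_le.1 hV]

end SmallDensity

/-! ### Achievability -/

section Feinstein

/-- A code for the channel `w` with codewords `c 0, …, c (m - 1)` and decoder `d`, where `d b ≥ m`
means that `b` is not decoded. Each codeword is decoded correctly with probability at least `1 - θ`,
and is only decoded to from outputs whose likelihood ratio against `q` is at least `γ`. -/
structure IsThresholdCode (w : X → Y → ℝ) (q : Y → ℝ) (γ θ : ℝ) (m : ℕ) (c : ℕ → X) (d : Y → ℕ) :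
    Prop where
  one_sub_le_sum : ∀ i < m, 1 - θ ≤ ∑ b, w (c i) b * (if d b = i then 1 else 0)
  mul_le : ∀ b, d b < m → γ * q b ≤ w (c (d b)) b

variable {w : X → Y → ℝ} {q : Y → ℝ} {γ θ : ℝ} {m : ℕ} {c : ℕ → X} {d : Y → ℕ}

omit [Fintype X] in
lemma IsThresholdCode.sum_mul_ite_le (h : IsThresholdCode w q γ θ m c d) (hw : IsChannel w)
    (hγ : 0 < γ) : ∑ b, q b * (if d b < m then 1 else 0) ≤ m / γ := by
  calc ∑ b, q b * (if d b < m then 1 else 0) ≤ ∑ b, ∑ i ∈ Finset.range m, w (c i) b / γ := by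
        refine Finset.sum_le_sum fun b _ => ?_
        have hnn : ∀ i ∈ Finset.range m, 0 ≤ w (c i) b / γ :=
          fun i _ => div_nonneg ((hw _).1 b) hγ.le
        split_ifs with hb
        · rw [mul_one]
          exact ((le_div_iff₀' hγ).2 (h.mul_le b hb)).trans
            (Finset.single_le_sum hnn (Finset.mem_range.2 hb))
        · rw [mul_zero]
          exact Finset.sum_nonneg hnn
    _ = m / γ := by
        rw [Finset.sum_comm]
        simp only [← Finset.sum_div, (hw _).2, Finset.sum_const, Finset.card_range, nsmul_eq_mul,
          mul_one]

omit [Fintype X] in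
lemma IsThresholdCode.exists_succ (h : IsThresholdCode w q γ θ m c d) {a : X}
    (ha : 1 - θ ≤ ∑ b, w a b * (if ¬d b < m ∧ γ * q b < w a b then 1 else 0)) :
    ∃ c d, IsThresholdCode w q γ θ (m + 1) c d := by
  set d' : Y → ℕ := fun b => if d b < m then d b else if γ * q b < w a b then m else m + 1
  have hlt (b : Y) (i : ℕ) (hi : i < m) : d' b = i ↔ d b = i := by grind
  have heq (b : Y) : d' b = m ↔ ¬d b < m ∧ γ * q b < w a b := by grind
  refine ⟨Function.update c m a, d', fun i hi => ?_, fun b hb => ?_⟩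
  · rcases Nat.lt_succ_iff_lt_or_eq.1 hi with hi | rfl
    · simpa only [Function.update_of_ne hi.ne, hlt _ _ hi] using h.one_sub_le_sum i hi
    · simpa only [Function.update_self, heq] using ha
  · rcases Nat.lt_succ_iff_lt_or_eq.1 hb with hb | hb
    · have hdb := ((hlt b _ hb).1 rfl).symm
      rw [Function.update_of_ne hb.ne, hdb]
      exact h.mul_le b (hdb ▸ hb)
    · rw [hb, Function.update_self]
      exact ((heq b).1 hb).2.le

lemma IsDist.exists_sum_mul_le {p : X → ℝ} (hp : IsDist p) (g : X → ℝ) :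
    ∃ a, ∑ a, p a * g a ≤ g a := by
  by_contra! hlt
  obtain ⟨a, -, ha⟩ := Finset.exists_ne_zero_of_sum_ne_zero (hp.2.trans_ne one_ne_zero)
  have hpos := Finset.sum_pos' (s := Finset.univ)
    (fun a _ => mul_nonneg (hp.1 a) (sub_nonneg.2 (hlt a).le))
    ⟨a, Finset.mem_univ a, mul_pos ((hp.1 a).lt_of_ne' ha) (sub_pos.2 (hlt a))⟩
  simp only [mul_sub, Finset.sum_sub_distrib, ← Finset.sum_mul, hp.2] at hpos
  linarith

/-- Averaged over `p`, an input sends the output into `D` with probability `outDist p w D`, so some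
input avoids both `D` and the outputs of small likelihood ratio. -/
lemma exists_one_sub_sub_le_sum_mul_ite {p : X → ℝ} (hp : IsDist p) (hw : IsChannel w) (γ : ℝ)
    (D : Y → Prop) [DecidablePred D] :
    ∃ a, 1 - ∑ b, outDist p w b * (if D b then 1 else 0)
        - ∑ a, p a * ∑ b, w a b * (if w a b ≤ γ * outDist p w b then 1 else 0) ≤
      ∑ b, w a b * (if ¬D b ∧ γ * outDist p w b < w a b then 1 else 0) := by
  have hunion (a : X) : 1 - ∑ b, w a b * (if D b then 1 else 0)
      - ∑ b, w a b * (if w a b ≤ γ * outDist p w b then 1 else 0) ≤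
      ∑ b, w a b * (if ¬D b ∧ γ * outDist p w b < w a b then 1 else 0) := by
    refine le_of_eq_of_le (congrArg (fun t => t - _ - _) (hw a).2.symm) ?_
    rw [← Finset.sum_sub_distrib, ← Finset.sum_sub_distrib]
    refine Finset.sum_le_sum fun b _ => ?_
    have hwb := (hw a).1 b
    split_ifs <;> grind
  have hout : ∑ b, outDist p w b * (if D b then 1 else 0) =
      ∑ a, p a * ∑ b, w a b * (if D b then 1 else 0) := by
    simp only [Finset.mul_sum, outDist, Finset.sum_mul, mul_assoc]
    exact Finset.sum_comm
  obtain ⟨a, ha⟩ := hp.exists_sum_mul_le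
    fun a => ∑ b, w a b * (if ¬D b ∧ γ * outDist p w b < w a b then 1 else 0)
  refine ⟨a, le_trans ?_ ha⟩
  calc _ = ∑ a, p a * (1 - ∑ b, w a b * (if D b then 1 else 0)
        - ∑ b, w a b * (if w a b ≤ γ * outDist p w b then 1 else 0)) := by
        simp only [hout, mul_sub, mul_one, Finset.sum_sub_distrib, hp.2]
    _ ≤ _ := Finset.sum_le_sum fun a _ => mul_le_mul_of_nonneg_left (hunion a) (hp.1 a)

/-- Feinstein's lemma. -/
theorem exists_isThresholdCode {p : X → ℝ} (hp : IsDist p) (hw : IsChannel w) (hγ : 0 < γ) {M : ℕ}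
    (h : ∑ a, p a * ∑ b, w a b * (if w a b ≤ γ * outDist p w b then 1 else 0) + M / γ ≤ θ) :
    ∃ c d, IsThresholdCode w (outDist p w) γ θ M c d := by
  induction M with
  | zero =>
    obtain ⟨a, -⟩ := hp.exists_sum_mul_le 0
    exact ⟨fun _ => a, fun _ => 0, by simp, by simp⟩
  | succ M ih =>
    have hM : (M : ℝ) / γ ≤ (M + 1 : ℕ) / γ := by
      gcongr
      exact M.le_succ
    obtain ⟨c, d, hcd⟩ := ih (by linarith)
    obtain ⟨a, ha⟩ := exists_one_sub_sub_le_sum_mul_ite hp hw γ (d · < M)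
    refine hcd.exists_succ (a := a) (le_trans ?_ ha)
    linarith [hcd.sum_mul_ite_le hw hγ]

end Feinstein

section BlockCode

/-- The law of `n` independent letters with law `p`. -/
def blockDist (p : Y → ℝ) (n : ℕ) (y : Fin n → Y) : ℝ := ∏ k, p (y k)

/-- The channel given by `n` independent uses of `W`, without feedback. -/
def blockChannel (W : X → Y → ℝ) (n : ℕ) (a : Fin n → X) (y : Fin n → Y) : ℝ :=
  ∏ k, W (a k) (y k)

/-- The feedback strategy that sends the codeword `a` whatever the outputs: the number of past
outputs gives the time. -/
def blockStrategy [Nonempty X] {n : ℕ} (a : Fin n → X) (l : List Y) : X :=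
  if h : l.length < n then a ⟨l.length, h⟩ else Classical.arbitrary X

variable {W : X → Y → ℝ} {n : ℕ}

lemma isDist_blockDist {p : Y → ℝ} (hp : IsDist p) (n : ℕ) : IsDist (blockDist p n) :=
  ⟨fun _ => Finset.prod_nonneg fun _ _ => hp.1 _, sum_prod_eq_one fun _ => hp.2⟩

omit [Fintype X] in
lemma isChannel_blockChannel (hW : IsChannel W) (n : ℕ) : IsChannel (blockChannel W n) :=
  fun _ => ⟨fun _ => Finset.prod_nonneg fun _ _ => (hW _).1 _, sum_prod_eq_one fun _ => (hW _).2⟩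

omit [Fintype Y] in
lemma outDist_blockDist_blockChannel (P : X → ℝ) (W : X → Y → ℝ) (n : ℕ) :
    outDist (blockDist P n) (blockChannel W n) = blockDist (outDist P W) n := by
  ext y
  simp only [outDist, blockDist, blockChannel, Finset.prod_univ_sum, Fintype.piFinset_univ,
    Finset.prod_mul_distrib]

omit [Fintype X] in
lemma feedbackExp_blockStrategy [Nonempty X] (W : X → Y → ℝ) (a : Fin n → X)
    (g : (Fin n → Y) → ℝ) :
    feedbackExp W (blockStrategy a) n g = ∑ y, blockChannel W n a y * g y := by
  simp [feedbackExp, blockStrategy, blockChannel]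

omit [Fintype X] in
lemma exists_errProb_le_of_codewords [Nonempty X] (hW : IsChannel W) {M : ℕ} (hM : 0 < M) {θ : ℝ}
    (c : ℕ → Fin n → X) (d : (Fin n → Y) → ℕ)
    (hc : ∀ i < M, 1 - θ ≤ ∑ y, blockChannel W n (c i) y * (if d y = i then 1 else 0)) :
    ∃ enc dec, errProb W n M enc dec ≤ θ := by
  set dec : (Fin n → Y) → Fin M := fun y => if h : d y < M then ⟨d y, h⟩ else ⟨0, hM⟩
  have hdec (m : Fin M) (y : Fin n → Y) :
      (if dec y = m then 0 else 1 : ℝ) ≤ 1 - if d y = m then 1 else 0 := by grind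
  refine ⟨fun m => blockStrategy (c m), dec, ?_⟩
  rw [errProb_eq_sum_feedbackExp, inv_mul_le_iff₀ (Nat.cast_pos.2 hM)]
  calc ∑ m : Fin M, feedbackExp W (blockStrategy (c m)) n (fun y => if dec y = m then 0 else 1)
      ≤ ∑ _m : Fin M, θ := by
        refine Finset.sum_le_sum fun m _ => (feedbackExp_mono hW _ (hdec m)).trans ?_
        rw [feedbackExp_blockStrategy]
        simp only [mul_sub, mul_one, Finset.sum_sub_distrib, (isChannel_blockChannel hW n _).2]
        linarith [hc m m.2]
    _ = M * θ := by simp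

omit [Fintype X] in
lemma errProb_nonneg (hW : IsChannel W) {M : ℕ} (enc : Fin M → List Y → X)
    (dec : (Fin n → Y) → Fin M) : 0 ≤ errProb W n M enc dec := by
  rw [errProb_eq_sum_feedbackExp]
  refine mul_nonneg (by positivity) (Finset.sum_nonneg fun m _ => ?_)
  refine (feedbackExp_const hW (enc m) n 0).ge.trans (feedbackExp_mono hW _ fun y => ?_)
  split_ifs
  exacts [le_rfl, zero_le_one]

omit [Fintype X] in
lemma minErr_le_errProb (hW : IsChannel W) {R : ℝ} (enc : Fin ⌈exp (n * R)⌉₊ → List Y → X)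
    (dec : (Fin n → Y) → Fin ⌈exp (n * R)⌉₊) : minErr W n R ≤ errProb W n _ enc dec :=
  csInf_le ⟨0, by rintro _ ⟨enc, dec, rfl⟩; exact errProb_nonneg hW enc dec⟩ ⟨enc, dec, rfl⟩

end BlockCode

section Achievability

variable {n : ℕ}

lemma sum_blockDist_mul_sq_sum_le {p ξ : Y → ℝ} (hp : IsDist p) (hξ : ∑ y, p y * ξ y = 0)
    (n : ℕ) :
    ∑ y, blockDist p n y * (∑ k, ξ (y k)) ^ 2 ≤ n * ∑ y, p y * ξ y ^ 2 := by
  have hstep (s : ℝ) : ∑ y, p y * (s + ξ y) ^ 2 = s ^ 2 + ∑ y, p y * ξ y ^ 2 := by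
    have hexpand (y : Y) : p y * (s + ξ y) ^ 2 =
        s ^ 2 * p y + 2 * s * (p y * ξ y) + p y * ξ y ^ 2 := by ring
    simp only [hexpand, Finset.sum_add_distrib, ← Finset.mul_sum, hp.2, hξ]
    ring
  simpa [feedbackExp, pathSum, blockDist] using feedbackExp_pathSum_le (W := fun (_ : Unit) => p)
    (fun _ => hp) (fun _ => ξ) (fun _ => ()) (fun _ s => s ^ 2) _ n fun _ _ _ s => (hstep s).le

lemma sum_blockDist_mul_ite_sum_le_neg {p ξ : Y → ℝ} (hp : IsDist p)
    (hξ : ∑ y, p y * ξ y = 0) {r : ℝ} (hr : 0 < r) :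
    ∑ y : Fin n → Y, blockDist p n y * (if ∑ k, ξ (y k) ≤ -r then 1 else 0) ≤
      n * (∑ y, p y * ξ y ^ 2) / r ^ 2 := by
  rw [le_div_iff₀ (by positivity), Finset.sum_mul]
  refine le_trans (Finset.sum_le_sum fun y _ => ?_) (sum_blockDist_mul_sq_sum_le hp hξ n)
  rw [mul_assoc]
  refine mul_le_mul_of_nonneg_left ?_ ((isDist_blockDist hp n).1 y)
  split_ifs
  · nlinarith
  · rw [zero_mul]
    positivity

omit [Fintype X] [Fintype Y] in
lemma prod_le_exp_mul_prod_iff {W : X → Y → ℝ} {q : Y → ℝ} (hW : ∀ x y, 0 < W x y)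
    (hq : ∀ y, 0 < q y) (γ : ℝ) (a : Fin n → X) (b : Fin n → Y) :
    blockChannel W n a b ≤ exp γ * blockDist q n b ↔
      ∑ k, infoDensity W q (a k) (b k) ≤ γ := by
  have hlog : ∑ k, infoDensity W q (a k) (b k) = log (blockChannel W n a b / blockDist q n b) := by
    rw [blockChannel, blockDist, ← Finset.prod_div_distrib,
      log_prod fun k _ => (div_pos (hW _ _) (hq _)).ne']
    rfl
  have hqn : 0 < blockDist q n b := Finset.prod_pos fun _ _ => hq _
  have hwn : 0 < blockChannel W n a b := Finset.prod_pos fun _ _ => hW _ _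
  rw [hlog, log_le_iff_le_exp (div_pos hwn hqn), div_le_iff₀ hqn]

variable {W : X → Y → ℝ} {P : X → ℝ}

lemma sum_blockDist_mul_ite_blockChannel_le (hP : IsDist P) (hWc : IsChannel W)
    (hW : ∀ x y, 0 < W x y) {v : ℝ}
    (hvar : ∑ x, P x * ∑ y, W x y * (infoDensity W (outDist P W) x y - mutInfo P W) ^ 2 ≤ v)
    (n : ℕ) {r : ℝ} (hr : 0 < r) :
    ∑ a, blockDist P n a * ∑ b, blockChannel W n a b *
        (if blockChannel W n a b ≤
          exp (n * mutInfo P W - r) * outDist (blockDist P n) (blockChannel W n) b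
          then 1 else 0) ≤ n * v / r ^ 2 := by
  set p : X × Y → ℝ := fun z => P z.1 * W z.1 z.2
  set ξ : X × Y → ℝ := fun z => infoDensity W (outDist P W) z.1 z.2 - mutInfo P W
  have hp : IsDist p := by
    refine ⟨fun z => mul_nonneg (hP.1 _) (hW _ _).le, ?_⟩
    simp only [p, Fintype.sum_prod_type, ← Finset.mul_sum, (hWc _).2, mul_one, hP.2]
  have hξ : ∑ z, p z * ξ z = 0 := by
    simp only [ξ, mul_sub, Finset.sum_sub_distrib, ← Finset.sum_mul, hp.2]
    simp only [p, Fintype.sum_prod_type, infoDensity, mutInfo, one_mul, sub_self]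
  have htail (a : Fin n → X) (b : Fin n → Y) : blockChannel W n a b ≤
      exp (n * mutInfo P W - r) * outDist (blockDist P n) (blockChannel W n) b ↔
        ∑ k, ξ (a k, b k) ≤ -r := by
    rw [outDist_blockDist_blockChannel, prod_le_exp_mul_prod_iff hW (outDist_pos hP hW)]
    simp only [ξ, Finset.sum_sub_distrib, Finset.sum_const, Finset.card_univ, Fintype.card_fin,
      nsmul_eq_mul]
    rw [sub_le_iff_le_add', ← sub_eq_add_neg]
  have hvar' : ∑ z, p z * ξ z ^ 2 ≤ v := by
    refine le_of_eq_of_le ?_ hvar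
    simp only [Fintype.sum_prod_type, p, ξ, Finset.mul_sum, mul_assoc]
  refine le_of_eq_of_le ?_ ((sum_blockDist_mul_ite_sum_le_neg (n := n) hp hξ hr).trans (by gcongr))
  rw [← (Equiv.arrowProdEquivProdArrow (Fin n) (fun _ => X) (fun _ => Y)).symm.sum_comp,
    Fintype.sum_prod_type]
  simp only [htail]
  simp only [Finset.mul_sum, ← mul_assoc, Equiv.arrowProdEquivProdArrow,
    Equiv.coe_fn_symm_mk, blockDist, blockChannel, p, Finset.prod_mul_distrib]
  congr!

lemma tendsto_natCast_mul_sub_mul_sqrt {C v : ℝ} (hC : 0 < C) (hv : 0 < v) (K : ℝ) :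
    Tendsto (fun n : ℕ => n * C - K * √(n * v)) atTop atTop := by
  have hsqrt := tendsto_sqrt_natCast_mul hv
  refine (hsqrt.atTop_mul_atTop₀
    (tendsto_atTop_add_const_right _ (-K) (hsqrt.atTop_mul_const (div_pos hC hv)))).congr
    fun n => ?_
  have hsq : √(n * v) ^ 2 = n * v := sq_sqrt (by positivity)
  field_simp
  linear_combination C * hsq

theorem eventually_exists_minErr_le (hP : IsDist P) (hWc : IsChannel W) (hW : ∀ x y, 0 < W x y)
    (hI : 0 < mutInfo P W) {v ε : ℝ} (hv : 0 < v) (hε : 0 < ε)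
    (hvar : ∑ x, P x * ∑ y, W x y * (infoDensity W (outDist P W) x y - mutInfo P W) ^ 2 ≤ v) :
    ∀ᶠ n : ℕ in atTop, ∃ R : ℝ,
      n * R = n * mutInfo P W - (√(2 / ε) + 1) * √(n * v) ∧ minErr W n R ≤ ε := by
  have : Nonempty X := (hP.exists_sum_mul_le 0).nonempty
  set K := √(2 / ε) with hK
  have hsize : Tendsto (fun n : ℕ => exp (-√(n * v)) + exp (-(n * mutInfo P W - K * √(n * v))))
      atTop (𝓝 0) := by
    simpa using (tendsto_exp_neg_atTop_nhds_zero.comp (tendsto_sqrt_natCast_mul hv)).add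
      (tendsto_exp_neg_atTop_nhds_zero.comp (tendsto_natCast_mul_sub_mul_sqrt hI hv K))
  filter_upwards [hsize.eventually_lt_const (half_pos hε), eventually_gt_atTop 0] with n hn hn0
  have hn0' : (0 : ℝ) < n := Nat.cast_pos.2 hn0
  refine ⟨(n * mutInfo P W - (K + 1) * √(n * v)) / n, mul_div_cancel₀ _ hn0'.ne', ?_⟩
  set R := (n * mutInfo P W - (K + 1) * √(n * v)) / n
  have hR : n * R = n * mutInfo P W - (K + 1) * √(n * v) := mul_div_cancel₀ _ hn0'.ne'
  set M := ⌈exp (n * R)⌉₊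
  have hchebyshev : n * v / (K * √(n * v)) ^ 2 = ε / 2 := by
    rw [mul_pow, hK, sq_sqrt (by positivity), sq_sqrt (by positivity)]
    field_simp
  have htail := (sum_blockDist_mul_ite_blockChannel_le hP hWc hW hvar n
    (r := K * √(n * v)) (by positivity)).trans_eq hchebyshev
  have hM : M / exp (n * mutInfo P W - K * √(n * v)) ≤ ε / 2 := by
    refine (div_le_of_le_mul₀ (exp_pos _).le (by positivity) ?_).trans hn.le
    calc (M : ℝ) ≤ exp (n * R) + 1 := (Nat.ceil_lt_add_one (exp_pos _).le).le
      _ = _ := by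
        rw [add_mul, ← exp_add, ← exp_add, neg_add_cancel, exp_zero, hR]
        ring_nf
  obtain ⟨c, d, hcd⟩ := exists_isThresholdCode (isDist_blockDist hP n)
    (isChannel_blockChannel hWc n) (exp_pos _) (M := M) (θ := ε)
    ((add_le_add htail hM).trans_eq (add_halves ε))
  obtain ⟨enc, dec, herr⟩ := exists_errProb_le_of_codewords hWc
    (Nat.ceil_pos.2 (exp_pos _)) c d hcd.one_sub_le_sum
  exact (minErr_le_errProb hWc enc dec).trans herr

end Achievability

/-! ### The very noisy limit -/

open scoped Asymptotics

section CodeSize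

variable {W : X → Y → ℝ} {n : ℕ} {R ε c B : ℝ}

omit [Fintype X] in
lemma exists_errProb_lt_of_minErr_lt [Nonempty X] (h : minErr W n R < c) :
    ∃ enc dec, errProb W n ⌈exp (n * R)⌉₊ enc dec < c := by
  have hne : {e | ∃ enc dec, e = errProb W n ⌈exp (n * R)⌉₊ enc dec}.Nonempty :=
    ⟨_, fun _ _ => Classical.arbitrary X, fun _ => ⟨0, Nat.ceil_pos.2 (exp_pos _)⟩, rfl⟩
  obtain ⟨_, ⟨enc, dec, rfl⟩, hlt⟩ := exists_lt_of_csInf_lt hne h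
  exact ⟨enc, dec, hlt⟩

omit [Fintype X] in
lemma log_Mfb_mem_Icc [Nonempty X] (hεc : ε < c)
    (hle : ∀ M : ℕ, 0 < M → ∀ enc dec, errProb W n M enc dec ≤ c → (M : ℝ) ≤ exp B)
    (hR : minErr W n R ≤ ε) : log (Mfb W n ε) ∈ Icc (n * R) B := by
  have hub : exp B ∈
      upperBounds {m : ℝ | ∃ R : ℝ, m = (⌈exp (n * R)⌉₊ : ℝ) ∧ minErr W n R ≤ ε} := by
    rintro _ ⟨R, rfl, hR⟩
    obtain ⟨enc, dec, hlt⟩ := exists_errProb_lt_of_minErr_lt (hR.trans_lt hεc)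
    exact hle _ (Nat.ceil_pos.2 (exp_pos _)) enc dec hlt.le
  have hlower : exp (n * R) ≤ Mfb W n ε :=
    (Nat.le_ceil _).trans (le_csSup ⟨_, hub⟩ ⟨R, rfl, hR⟩)
  have hpos : 0 < Mfb W n ε := (exp_pos _).trans_le hlower
  exact ⟨(le_log_iff_exp_le hpos).2 hlower,
    (log_le_iff_le_exp hpos).2 (csSup_le ⟨_, R, rfl, hR⟩ hub)⟩

end CodeSize

lemma eventually_exists_minErr_le_of_abs_iStar_le [Nonempty X] {W : X → Y → ℝ} {κ ε : ℝ}
    (hWc : IsChannel W) (hW : ∀ x y, 0 < W x y) (hC : 0 < capacity W)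
    (hκ : ∀ x y, |iStar W x y| ≤ κ) (hκ1 : κ ≤ 1 / 9) (hε : 0 < ε) :
    ∀ᶠ n : ℕ in atTop, ∃ R : ℝ,
      n * R = n * capacity W - (√(2 / ε) + 1) * √(n * (3 * capacity W)) ∧ minErr W n R ≤ ε := by
  obtain ⟨P, hP, hPq⟩ := exists_mem_capacityAchievers_outDist_eq_qStar hW
  have hvar : ∑ x, P x * ∑ y, W x y * (infoDensity W (outDist P W) x y - mutInfo P W) ^ 2 ≤
      3 * capacity W := by
    calc _ = ∑ x, P x * nu W x := by
          refine Finset.sum_congr rfl fun x _ => ?_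
          by_cases hx : P x = 0
          · rw [hx, zero_mul, zero_mul]
          · rw [hPq, hP.2]
            exact congrArg _
              (sum_mul_iStar_sub_capacity_sq hWc (relEntropy_qStar_eq_capacity hWc hW hP hx))
      _ ≤ 2 * capacity W + 9 * κ * capacity W := by
          linarith [(abs_le.1 (abs_sum_mul_nu_sub_two_mul_capacity_le hWc hW hκ hκ1 hP)).2]
      _ ≤ 3 * capacity W := by nlinarith
  have hach := eventually_exists_minErr_le hP.1 hWc hW (hP.2.symm ▸ hC) (by positivity) hε hvar
  rwa [hP.2] at hach

lemma nonempty_of_capacity_pos {W : X → Y → ℝ} (h : 0 < capacity W) : Nonempty X := by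
  by_contra hX
  rw [not_nonempty_iff] at hX
  simp [capacity, IsDist] at h

/-- The channels `W i` become very noisy along `l`: they have positive transition probabilities and
positive capacity, and their information densities tend to `0`. -/
structure IsVeryNoisy {ι : Type*} (l : Filter ι) (W : ι → X → Y → ℝ) : Prop where
  eventually_isChannel : ∀ᶠ i in l, IsChannel (W i)
  eventually_pos : ∀ᶠ i in l, ∀ x y, 0 < W i x y
  eventually_capacity_pos : ∀ᶠ i in l, 0 < capacity (W i)
  eventually_abs_iStar_le : ∀ κ > 0, ∀ᶠ i in l, ∀ x y, |iStar (W i) x y| ≤ κ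

namespace IsVeryNoisy

variable {ι : Type*} {l : Filter ι} {W : ι → X → Y → ℝ}

lemma mono {l' : Filter ι} (h : IsVeryNoisy l W) (hl : l' ≤ l) : IsVeryNoisy l' W :=
  ⟨hl h.eventually_isChannel, hl h.eventually_pos, hl h.eventually_capacity_pos,
    fun κ hκ => hl (h.eventually_abs_iStar_le κ hκ)⟩

lemma isEquivalent_two_mul_capacity (h : IsVeryNoisy l W) {V : (X → Y → ℝ) → ℝ}
    (hV : ∀ κ ≤ 1 / 9, ∀ U, Nonempty X → IsChannel U → (∀ x y, 0 < U x y) →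
      (∀ x y, |iStar U x y| ≤ κ) → |V U - 2 * capacity U| ≤ 9 * κ * capacity U) :
    (fun i => V (W i)) ~[l] fun i => 2 * capacity (W i) := by
  refine Asymptotics.isLittleO_iff.2 fun c hc => ?_
  have hκ : 0 < min (1 / 9) (2 / 9 * c) := by positivity
  filter_upwards [h.eventually_isChannel, h.eventually_pos, h.eventually_capacity_pos,
    h.eventually_abs_iStar_le _ hκ] with i hWc hW hC hi
  calc |V (W i) - 2 * capacity (W i)| ≤ 9 * min (1 / 9) (2 / 9 * c) * capacity (W i) :=
        hV _ (min_le_left _ _) _ (nonempty_of_capacity_pos hC) hWc hW hi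
    _ ≤ 9 * (2 / 9 * c) * capacity (W i) := by
        gcongr
        exact min_le_right _ _
    _ = c * ‖2 * capacity (W i)‖ := by
        rw [Real.norm_of_nonneg (by positivity)]
        ring

lemma isEquivalent_Vmin (h : IsVeryNoisy l W) :
    (fun i => Vmin (W i)) ~[l] fun i => 2 * capacity (W i) :=
  h.isEquivalent_two_mul_capacity fun _ hκ1 _ _ hWc hW hκ =>
    abs_Vmin_sub_two_mul_capacity_le hWc hW hκ hκ1

lemma isEquivalent_Vmax (h : IsVeryNoisy l W) :
    (fun i => Vmax (W i)) ~[l] fun i => 2 * capacity (W i) :=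
  h.isEquivalent_two_mul_capacity fun _ hκ1 _ _ hWc hW hκ =>
    abs_Vmax_sub_two_mul_capacity_le hWc hW hκ hκ1

lemma eventually_secondOrderRate_mem_Icc (h : IsVeryNoisy l W) {V : ι → ℝ}
    (hV : V ~[l] fun i => 2 * capacity (W i)) {ε η : ℝ} (hε0 : 0 < ε) (hε1 : ε < 1) (hη : 0 < η) :
    ∀ᶠ i in l, ∀ᶠ n : ℕ in atTop,
      (log (Mfb (W i) n ε) - n * capacity (W i)) / √(n * V i) ∈
        Icc (-((√(2 / ε) + 1) * √3)) (gcdfInv ε + η) := by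
  obtain ⟨c, hεc, hc⟩ := exists_between
    ((gcdf_gcdfInv hε0 hε1).symm.trans_lt (strictMono_gcdf (lt_add_of_pos_right _ hη)))
  obtain ⟨δ, hδ, hconverse⟩ := exists_eventually_le_exp_of_errProb_le (X := X) (Y := Y) hc
  obtain ⟨κ, hκ0, hκ⟩ : ∃ κ > 0, κ < min (1 / 9) (δ / 18) := exists_between (by positivity)
  obtain ⟨hκ1, hκδ⟩ := lt_min_iff.1 hκ
  filter_upwards [h.eventually_isChannel, h.eventually_pos, h.eventually_capacity_pos,
    h.eventually_abs_iStar_le κ hκ0, hV.isLittleO.def (c := 9 / 2 * κ) (by positivity)]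
    with i hWc hW hC hi hVi
  have := nonempty_of_capacity_pos hC
  have hVC : |V i - 2 * capacity (W i)| ≤ 9 * κ * capacity (W i) := by
    rw [Real.norm_of_nonneg (by positivity : 0 ≤ 2 * capacity (W i))] at hVi
    exact hVi.trans_eq (by ring)
  have hCV : capacity (W i) ≤ V i := by nlinarith [(abs_le.1 hVC).1]
  have hV0 : 0 < V i := hC.trans_le hCV
  have hdiff (x : X) : IsNearDiffusive (W i x)
      (fun y => (infoDensity (W i) (qStar (W i)) x y - capacity (W i)) / √(V i)) δ :=
    (isNearDiffusive_iStar hWc hW hC hi hκ1.le hVC x).mono (by linarith)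
  filter_upwards [eventually_gt_atTop 0,
    hconverse _ _ _ _ hWc (qStar_pos hW) (sum_qStar hWc hW) hV0 hdiff,
    eventually_exists_minErr_le_of_abs_iStar_le hWc hW hC hi hκ1.le hε0]
    with n hn hupper ⟨R, hR, hlower⟩
  have hr : 0 < √(n * V i) := sqrt_pos.2 (by positivity)
  have hsqrt : √(n * (3 * capacity (W i))) ≤ √3 * √(n * V i) := by
    rw [← sqrt_mul (by norm_num), mul_left_comm]
    gcongr
  obtain ⟨hnR, hB⟩ := log_Mfb_mem_Icc hεc hupper hlower
  constructor
  · rw [le_div_iff₀ hr]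
    nlinarith [mul_le_mul_of_nonneg_left hsqrt (by positivity : 0 ≤ √(2 / ε) + 1)]
  · rw [div_le_iff₀ hr]
    linarith

end IsVeryNoisy

lemma limsup_limsup_le {ι κ : Type*} {l : Filter ι} {l' : Filter κ} [l.NeBot] [l'.NeBot]
    {u : ι → κ → ℝ} {a b : ℝ} (h : ∀ η > 0, ∀ᶠ i in l, ∀ᶠ n in l', u i n ∈ Icc a (b + η)) :
    limsup (fun i => limsup (u i) l') l ≤ b := by
  have hinner : ∀ η > 0, ∀ᶠ i in l, limsup (u i) l' ∈ Icc a (b + η) := by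
    intro η hη
    filter_upwards [h η hη] with i hi
    have hlower : ∀ᶠ n in l', a ≤ u i n := hi.mono fun n hn => hn.1
    have hupper : ∀ᶠ n in l', u i n ≤ b + η := hi.mono fun n hn => hn.2
    exact ⟨le_limsup_of_frequently_le hlower.frequently ⟨_, hupper⟩,
      limsup_le_of_le (IsBoundedUnder.isCoboundedUnder_le ⟨a, hlower⟩) hupper⟩
  refine le_of_forall_pos_le_add fun η hη => ?_
  exact limsup_le_of_le (IsBoundedUnder.isCoboundedUnder_le
    ⟨a, (hinner η hη).mono fun i hi => hi.1⟩) ((hinner η hη).mono fun i hi => hi.2)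

theorem vnc_feedback_no_improvement_general {ι : Type*} {l : Filter ι} [l.NeBot]
    {W : ι → X → Y → ℝ} (h : IsVeryNoisy l W) {ε : ℝ} (hε0 : 0 < ε) (hε1 : ε < 1) :
    limsup (fun i => limsup (fun n : ℕ =>
        (log (Mfb (W i) n ε) - n * capacity (W i)) / √(n * Vmin (W i))) atTop) l ≤ gcdfInv ε ∧
      limsup (fun i => limsup (fun n : ℕ =>
        (log (Mfb (W i) n ε) - n * capacity (W i)) / √(n * Vmax (W i))) atTop) l ≤ gcdfInv ε :=
  ⟨limsup_limsup_le fun _ hη =>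
      h.eventually_secondOrderRate_mem_Icc h.isEquivalent_Vmin hε0 hε1 hη,
    limsup_limsup_le fun _ hη =>
      h.eventually_secondOrderRate_mem_Icc h.isEquivalent_Vmax hε0 hε1 hη⟩

section Perturbation

variable {Γ : Y → ℝ} {lam : X → Y → ℝ} {ζ : ℝ}

lemma abs_apply_apply_le_norm (lam : X → Y → ℝ) (x : X) (y : Y) : |lam x y| ≤ ‖lam‖ :=
  (norm_le_pi_norm (lam x) y).trans (norm_le_pi_norm lam x)

lemma IsDist.abs_sum_mul_le {P : X → ℝ} (hP : IsDist P) (lam : X → Y → ℝ) (y : Y) :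
    |∑ x, P x * lam x y| ≤ ‖lam‖ := by
  calc |∑ x, P x * lam x y| ≤ ∑ x, |P x * lam x y| := Finset.abs_sum_le_sum_abs _ _
    _ ≤ ∑ x, P x * ‖lam‖ := by
        refine Finset.sum_le_sum fun x _ => ?_
        rw [abs_mul, abs_of_nonneg (hP.1 x)]
        exact mul_le_mul_of_nonneg_left (abs_apply_apply_le_norm lam x y) (hP.1 x)
    _ = ‖lam‖ := by rw [← Finset.sum_mul, hP.2, one_mul]

lemma abs_log_one_add_le {u r : ℝ} (hu : |u| ≤ r) (hr : r ≤ 1 / 2) : |log (1 + u)| ≤ 2 * r := by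
  have h := Complex.norm_log_one_add_half_le_self (z := u) (by simpa using hu.trans hr)
  have hu' : 0 ≤ 1 + u := by linarith [(abs_le.1 hu).1]
  rw [← Complex.ofReal_one, ← Complex.ofReal_add, ← Complex.ofReal_log hu', Complex.norm_real,
    Complex.norm_real, Real.norm_eq_abs, Real.norm_eq_abs] at h
  linarith [abs_nonneg u]

lemma VNC_pos (hΓpos : ∀ y, 0 < Γ y) (hζ : |ζ| * ‖lam‖ < 1) (x : X) (y : Y) :
    0 < VNC Γ lam ζ x y := by
  have hle : |ζ * lam x y| ≤ |ζ| * ‖lam‖ := by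
    rw [abs_mul]
    gcongr
    exact abs_apply_apply_le_norm lam x y
  exact mul_pos (hΓpos y) (by linarith [(abs_le.1 hle).1])

omit [Fintype X] in
lemma isChannel_VNC (hΓ : IsDist Γ) (hlam : ∀ x, ∑ y, Γ y * lam x y = 0)
    (hpos : ∀ x y, 0 < VNC Γ lam ζ x y) : IsChannel (VNC Γ lam ζ) := by
  refine fun x => ⟨fun y => (hpos x y).le, ?_⟩
  simp only [VNC, mul_add, mul_one, mul_left_comm (Γ _) ζ, Finset.sum_add_distrib,
    ← Finset.mul_sum, hΓ.2, hlam, mul_zero, add_zero]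

omit [Fintype Y] in
lemma outDist_VNC {P : X → ℝ} (hP : IsDist P) (Γ : Y → ℝ) (lam : X → Y → ℝ) (ζ : ℝ) (y : Y) :
    outDist P (VNC Γ lam ζ) y = Γ y * (1 + ζ * ∑ x, P x * lam x y) := by
  have hterm (x : X) : P x * (Γ y * (1 + ζ * lam x y)) =
      Γ y * (P x + ζ * (P x * lam x y)) := by ring
  simp only [outDist, VNC, hterm, ← Finset.mul_sum, Finset.sum_add_distrib, hP.2]

lemma abs_iStar_VNC_le [Nonempty X] (hΓpos : ∀ y, 0 < Γ y) (hζ : |ζ| * ‖lam‖ ≤ 1 / 2) (x : X)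
    (y : Y) : |iStar (VNC Γ lam ζ) x y| ≤ 4 * (|ζ| * ‖lam‖) := by
  obtain ⟨P, ⟨hP, -⟩, hPq⟩ := exists_mem_capacityAchievers_outDist_eq_qStar
    (VNC_pos (lam := lam) hΓpos (hζ.trans_lt one_half_lt_one))
  have hmul {t : ℝ} (ht : |t| ≤ ‖lam‖) : |ζ * t| ≤ |ζ| * ‖lam‖ := by
    rw [abs_mul]
    gcongr
  have hne {t : ℝ} (ht : |t| ≤ ‖lam‖) : 1 + ζ * t ≠ 0 := by
    linarith [(abs_le.1 (hmul ht)).1]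
  have hx := abs_apply_apply_le_norm lam x y
  have hmean := hP.abs_sum_mul_le lam y
  rw [iStar, ← hPq, outDist_VNC hP, VNC, mul_div_mul_left _ _ (hΓpos y).ne',
    log_div (hne hx) (hne hmean)]
  calc _ ≤ _ := abs_sub _ _
    _ ≤ 2 * (|ζ| * ‖lam‖) + 2 * (|ζ| * ‖lam‖) :=
        add_le_add (abs_log_one_add_le (hmul hx) hζ) (abs_log_one_add_le (hmul hmean) hζ)
    _ = 4 * (|ζ| * ‖lam‖) := by ring

lemma exists_ne_sum_mul_of_bigC_pos (hC : 0 < bigC Γ lam) :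
    ∃ P x y, IsDist P ∧ 0 < P x ∧ lam x y ≠ ∑ a, P a * lam a y := by
  by_contra! hconst
  refine hC.not_ge (Real.sSup_nonpos ?_)
  rintro _ ⟨P, hP, rfl⟩
  refine (mul_eq_zero_of_right _ (Finset.sum_eq_zero fun y _ => mul_eq_zero_of_right _ ?_)).le
  have hsq (x : X) : P x * lam x y ^ 2 = P x * (∑ a, P a * lam a y) ^ 2 := by
    rcases (hP.1 x).eq_or_lt with hx | hx
    · rw [← hx, zero_mul, zero_mul]
    · rw [hconst P x y hP hx]
  rw [Finset.sum_congr rfl fun x _ => hsq x, ← Finset.sum_mul, hP.2, one_mul, sub_self]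

lemma isVeryNoisy_VNC (hΓ : IsDist Γ) (hΓpos : ∀ y, 0 < Γ y)
    (hlam : ∀ x, ∑ y, Γ y * lam x y = 0) (hC : 0 < bigC Γ lam) :
    IsVeryNoisy (𝓝[≠] 0) (VNC Γ lam) := by
  obtain ⟨P, x₀, y₀, hP, hx₀, hne⟩ := exists_ne_sum_mul_of_bigC_pos hC
  have : Nonempty X := ⟨x₀⟩
  have hsmall {r : ℝ} (hr : 0 < r) : ∀ᶠ ζ : ℝ in 𝓝[≠] 0, |ζ| * ‖lam‖ < r := by
    refine nhdsWithin_le_nhds (Tendsto.eventually_lt_const hr ?_)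
    exact Continuous.tendsto' (by fun_prop) _ _ (by simp)
  have hpos : ∀ᶠ ζ in 𝓝[≠] 0, ∀ x y, 0 < VNC Γ lam ζ x y :=
    (hsmall one_pos).mono fun _ hζ => VNC_pos hΓpos hζ
  have hchannel : ∀ᶠ ζ in 𝓝[≠] 0, IsChannel (VNC Γ lam ζ) :=
    hpos.mono fun _ hζ => isChannel_VNC hΓ hlam hζ
  refine ⟨hchannel, hpos, ?_, fun κ hκ => ?_⟩
  · filter_upwards [hchannel, hpos, self_mem_nhdsWithin] with ζ hWc hW hζ
    refine capacity_pos hWc hW hP hx₀ fun heq => hne ?_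
    have hmean := congrFun heq y₀
    rw [outDist_VNC hP] at hmean
    exact mul_left_cancel₀ hζ (add_left_cancel (mul_left_cancel₀ (hΓpos y₀).ne' hmean))
  · filter_upwards [hsmall one_half_pos, hsmall (by positivity : 0 < κ / 4)] with ζ hζ hζκ x y
    linarith [abs_iStar_VNC_le hΓpos hζ.le x y]

end Perturbation

/-- Theorem 5 (Feedback does not improve the second-order coding rate in the
very noisy limit). -/
theorem vnc_feedback_no_improvement
    {X Y : Type*} [Fintype X] [Fintype Y]
    (Γ : Y → ℝ) (hΓ : IsDist Γ) (hΓpos : ∀ y, 0 < Γ y)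
    (lam : X → Y → ℝ) (hlam : ∀ x, ∑ y, Γ y * lam x y = 0)
    (hC : 0 < bigC Γ lam) :
    (∀ᶠ ζ : ℝ in nhdsWithin 0 (Set.Ioi 0), 0 < capacity (VNC Γ lam ζ)) ∧
    (∀ ε : ℝ, 0 < ε → ε ≤ 1 / 2 →
      Filter.limsup (fun ζ : ℝ =>
          Filter.limsup (fun n : ℕ =>
            (Real.log (Mfb (VNC Γ lam ζ) n ε) - n * capacity (VNC Γ lam ζ)) /
              Real.sqrt (n * Vmin (VNC Γ lam ζ))) Filter.atTop)
        (nhdsWithin 0 (Set.Ioi 0)) ≤ gcdfInv ε) ∧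
    (∀ ε : ℝ, 1 / 2 < ε → ε < 1 →
      Filter.limsup (fun ζ : ℝ =>
          Filter.limsup (fun n : ℕ =>
            (Real.log (Mfb (VNC Γ lam ζ) n ε) - n * capacity (VNC Γ lam ζ)) /
              Real.sqrt (n * Vmax (VNC Γ lam ζ))) Filter.atTop)
        (nhdsWithin 0 (Set.Ioi 0)) ≤ gcdfInv ε) := by
  have h := (isVeryNoisy_VNC hΓ hΓpos hlam hC).mono (nhdsGT_le_nhdsNE 0)
  exact ⟨h.eventually_capacity_pos,
    fun ε h0 h1 => (vnc_feedback_no_improvement_general h h0 (h1.trans_lt one_half_lt_one)).1,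
    fun ε h0 h1 => (vnc_feedback_no_improvement_general h (one_half_pos.trans h0) h1).2⟩

end Paper
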